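/- arXiv:1901.03361 — 2 statements merged into one kernel-verified Lean document; each statement's English description precedes it below -/
import Mathlib

section
/- Let C be a finite quotienting Boolean algebra over a finite alphabet A and let ρ : 2^{A*} → R be a nice multiplicative rating map. Then P_{BPol(C)}[ρ] = {(D,r) ∈ (A*/∼_C) × R : r ∈ I_{BPol(C)}[D, ρ]} is the greatest BPol(C)-saturated subset of (A*/∼_C) × R for ρ: it is BPol(C)-saturated, and it contains every BPol(C)-saturated subset of (A*/∼_C) × R. -/
open Set

namespace Paper

abbrev Lang (A : Type) := Set (List A)
abbrev LClass (A : Type) := Set (Set (List A))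

variable {A R M : Type}

/-- A lattice of languages: contains `∅` and `A*`, closed under finite union
and finite intersection. -/
def LangLattice (𝒞 : LClass A) : Prop :=
  (∅ : Lang A) ∈ 𝒞 ∧ (Set.univ : Lang A) ∈ 𝒞 ∧
    (∀ K L : Lang A, K ∈ 𝒞 → L ∈ 𝒞 → K ∪ L ∈ 𝒞) ∧
    (∀ K L : Lang A, K ∈ 𝒞 → L ∈ 𝒞 → K ∩ L ∈ 𝒞)

/-- A Boolean algebra of languages: a lattice closed under complement. -/
def LangBoolAlg (𝒞 : LClass A) : Prop :=
  LangLattice 𝒞 ∧ ∀ L : Lang A, L ∈ 𝒞 → Lᶜ ∈ 𝒞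

/-- A class is quotient-closed when it is closed under left and right quotients
by words. -/
def QuotientClosed (𝒞 : LClass A) : Prop :=
  ∀ L ∈ 𝒞, ∀ w : List A,
    {u : List A | w ++ u ∈ L} ∈ 𝒞 ∧ {u : List A | u ++ w ∈ L} ∈ 𝒞

/-- The canonical preorder `≤_𝒞` associated with a class `𝒞`. -/
def cle (𝒞 : LClass A) (w w' : List A) : Prop := ∀ L ∈ 𝒞, w ∈ L → w' ∈ L

/-- The canonical equivalence `∼_𝒞` associated with a class `𝒞`. -/
def ceq (𝒞 : LClass A) (w w' : List A) : Prop := ∀ L ∈ 𝒞, (w ∈ L ↔ w' ∈ L)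

/-- The `∼_𝒞`-class of the word `w`. -/
def cclass (𝒞 : LClass A) (w : List A) : Lang A := {v | ceq 𝒞 w v}

/-- `D` is a `∼_𝒞`-class. -/
def IsCClass (𝒞 : LClass A) (D : Lang A) : Prop := ∃ w : List A, D = cclass 𝒞 w

/-- Multiplication of `∼_𝒞`-classes (the class of the concatenation of
representatives). -/
def cmul (𝒞 : LClass A) (D E : Lang A) : Lang A :=
  {x | ∃ u ∈ D, ∃ v ∈ E, ceq 𝒞 (u ++ v) x}

/-- Language concatenation. -/
def cat (K L : Lang A) : Lang A := {w | ∃ u ∈ K, ∃ v ∈ L, u ++ v = w}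

/-- Marked concatenation `K a L`. -/
def mcat (K : Lang A) (a : A) (L : Lang A) : Lang A :=
  {w | ∃ u ∈ K, ∃ v ∈ L, u ++ a :: v = w}

/-- Boolean closure: the least Boolean algebra containing `𝒞`. -/
def BoolC (𝒞 : LClass A) : LClass A := ⋂₀ {𝒟 : LClass A | LangBoolAlg 𝒟 ∧ 𝒞 ⊆ 𝒟}

/-- Polynomial closure: the least class containing `𝒞` closed under union and
marked concatenation. -/
def PolC (𝒞 : LClass A) : LClass A :=
  ⋂₀ {𝒟 : LClass A | 𝒞 ⊆ 𝒟 ∧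
    (∀ K L : Lang A, K ∈ 𝒟 → L ∈ 𝒟 → K ∪ L ∈ 𝒟) ∧
    (∀ (K L : Lang A) (a : A), K ∈ 𝒟 → L ∈ 𝒟 → mcat K a L ∈ 𝒟)}

/-- A cover of `L`: a finite set of languages whose union includes `L`. -/
def IsCover (Ks : LClass A) (L : Lang A) : Prop := Ks.Finite ∧ L ⊆ ⋃₀ Ks

/-- A `𝒞`-cover of `L`: a cover all of whose members belong to `𝒞`. -/
def IsCCover (𝒞 Ks : LClass A) (L : Lang A) : Prop := IsCover Ks L ∧ Ks ⊆ 𝒞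

/-- `α : A* → M` is a monoid morphism. -/
def IsMonoidMorphism [Monoid M] (α : List A → M) : Prop :=
  α [] = 1 ∧ ∀ u v : List A, α (u ++ v) = α u * α v

/-- `α` recognizes `L`. -/
def Recognizes [Monoid M] (α : List A → M) (L : Lang A) : Prop :=
  ∃ F : Set M, L = α ⁻¹' F

/-- A language is regular when it is recognized by a monoid morphism into a
finite monoid. -/
def RegularLang (L : Lang A) : Prop :=
  ∃ (N : Type) (_ : Monoid N) (_ : Finite N) (α : List A → N),
    IsMonoidMorphism α ∧ Recognizes α L

/-- The canonical order on a rating set: `r ≤ s` iff `r + s = s`. -/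
def rle [Add R] (r s : R) : Prop := r + s = s

/-- A rating map: maps `∅` to `0` and commutes with binary union. -/
def IsRatingMap [AddCommMonoid R] (ρ : Lang A → R) : Prop :=
  ρ ∅ = 0 ∧ ∀ K L : Lang A, ρ (K ∪ L) = ρ K + ρ L

/-- A nice rating map: the value of any language is a finite sum of values of
its words. -/
def IsNice [AddCommMonoid R] (ρ : Lang A → R) : Prop :=
  ∀ K : Lang A, ∃ l : List (List A), (∀ w ∈ l, w ∈ K) ∧
    ρ K = (l.map fun w => ρ {w}).sum

/-- A multiplicative rating map: also a morphism for concatenation. -/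
def IsMultiplicative [Semiring R] (ρ : Lang A → R) : Prop :=
  ρ ({[]} : Lang A) = 1 ∧ ∀ K L : Lang A, ρ (cat K L) = ρ K * ρ L

/-- An endomorphism of the additive monoid `(R, +)`. -/
def IsAddEndo [AddCommMonoid R] (γ : R → R) : Prop :=
  γ 0 = 0 ∧ ∀ r s : R, γ (r + s) = γ r + γ s

/-- A quasi-multiplicative rating map for the endomorphism `γ`. -/
def IsQuasiMult [Semiring R] (ρ : Lang A → R) (γ : R → R) : Prop :=
  IsAddEndo γ ∧ (∀ q r s : R, γ (q * γ r * s) = γ (q * r * s)) ∧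
    ∀ K L : Lang A, ρ (cat K L) = γ (ρ K * ρ L)

/-- The `ρ`-imprint of a set of languages. -/
def imprint [Add R] (ρ : Lang A → R) (Ks : LClass A) : Set R :=
  {r | ∃ K ∈ Ks, rle r (ρ K)}

/-- The `𝒟`-optimal `ρ`-imprint on `L` (the imprint of any optimal `𝒟`-cover
of `L`, i.e. the intersection of the imprints of all `𝒟`-covers of `L`). -/
def optImprint [Add R] (𝒟 : LClass A) (ρ : Lang A → R) (L : Lang A) : Set R :=
  {r | ∀ Ks : LClass A, IsCCover 𝒟 Ks L → r ∈ imprint ρ Ks}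

/-- Downset operation on subsets of a rating set. -/
def dclos [Add R] (U : Set R) : Set R := {r | ∃ s ∈ U, rle r s}

/-- Pointwise multiplication of subsets of a rating set. -/
def smul [Mul R] (U V : Set R) : Set R := {x | ∃ u ∈ U, ∃ v ∈ V, u * v = x}

/-- The auxiliary set `Rbpol(S)`: the least subset of
`(A*/∼_𝒞) × R × 2^R` containing the trivial elements and closed under extended
downset, multiplication and `S`-restricted closure. -/
inductive Rbpol [Semiring R] (𝒞 : LClass A) (ρ : Lang A → R)
    (S : Set (Lang A × R)) : Lang A → R → Set R → Prop
  | triv (w : List A) : Rbpol 𝒞 ρ S (cclass 𝒞 w) (ρ {w}) {ρ {w}}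
  | down {C' : Lang A} {q : R} {U V : Set R} :
      Rbpol 𝒞 ρ S C' q U → V ⊆ dclos U → Rbpol 𝒞 ρ S C' q V
  | mul {C' D : Lang A} {q r : R} {U V : Set R} :
      Rbpol 𝒞 ρ S C' q U → Rbpol 𝒞 ρ S D r V →
      Rbpol 𝒞 ρ S (cmul 𝒞 C' D) (q * r) (smul U V)
  | clos {E : Lang A} {f : R} {F : Set R} :
      Rbpol 𝒞 ρ S E f F → cmul 𝒞 E E = E → f * f = f → smul F F = F →
      Rbpol 𝒞 ρ S E f (smul F (smul {r : R | (E, r) ∈ S} F))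

/-- `S ⊆ (A*/∼_𝒞) × R` is `BPol(𝒞)`-saturated for `ρ`. -/
def BPolSaturated [Semiring R] (𝒞 : LClass A) (ρ : Lang A → R)
    (S : Set (Lang A × R)) : Prop :=
  (∀ p ∈ S, IsCClass 𝒞 p.1) ∧
  ∀ p ∈ S, ∃ l : List R, l ≠ [] ∧ rle p.2 l.sum ∧
    ∀ r ∈ l, Rbpol 𝒞 ρ S p.1 r {l.sum}

/-!
Membership in a language of `BPol(𝒞)` depends only on the equivalence class of a word for some level
`k` of a stratification `≤_k` of the canonical preorder of `Pol(𝒞)`. Both inclusions compare the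
sets in `Rbpol` with the ratings of these classes.

If `S` is saturated and `(D, r) ∈ S`, then unfolding saturation yields words of `D` rooting
arbitrarily high trees which go up for `≤_k` and whose sets of siblings all have a rating above `r`;
for the closure rule this rests on `eⁱ ≤_k eᵃ g eᵇ` for `g ∼_𝒞 e` and large exponents. Since there
are finitely many `≤_k`-classes, some node of a high tree is equivalent to all of its children, so
the rating of its class is above `r`.

Conversely, if `S` contains the ratings of all classes of some level, then every word `w` has a
triple in `Rbpol(S)` whose third component bounds the ratings of all classes above `w` at a level
independent of `w`. This is an argument in the style of Simon's factorization forests: the property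
passes to products, and to stars of words with a common idempotent value because the closure rule
absorbs whatever stands between two blocks with the same idempotent bound.
-/

open scoped Computability

/-! ### Multiplicative ideals of languages -/

section MulIdeals

variable {B N : Type}

/-- A family of languages closed under sublanguages, finite unions and finite products. The
examples below are all families of languages "of bounded cost", for various costs of words. -/
structure IsMulIdeal (𝔅 : Set (Language B)) : Prop where
  one_mem : 1 ∈ 𝔅
  mem_of_le : ∀ {X Y : Language B}, X ≤ Y → Y ∈ 𝔅 → X ∈ 𝔅
  add_mem : ∀ {X Y : Language B}, X ∈ 𝔅 → Y ∈ 𝔅 → X + Y ∈ 𝔅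
  mul_mem : ∀ {X Y : Language B}, X ∈ 𝔅 → Y ∈ 𝔅 → X * Y ∈ 𝔅

theorem IsMulIdeal.comap {B' : Type} {𝔅 : Set (Language B)} (h𝔅 : IsMulIdeal 𝔅)
    {φ : List B' → List B} (hnil : φ [] = []) (happend : ∀ u v, φ (u ++ v) = φ u ++ φ v) :
    IsMulIdeal {Y : Language B' | ∃ X ∈ 𝔅, ∀ w ∈ Y, φ w ∈ X} where
  one_mem := ⟨1, h𝔅.one_mem, by rintro _ rfl; exact hnil⟩
  mem_of_le := fun hle ⟨X, hX, hY⟩ => ⟨X, hX, fun w hw => hY w (hle hw)⟩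
  add_mem := by
    rintro Y Y' ⟨X, hX, hY⟩ ⟨X', hX', hY'⟩
    exact ⟨X + X', h𝔅.add_mem hX hX', fun w hw => hw.imp (hY w) (hY' w)⟩
  mul_mem := by
    rintro Y Y' ⟨X, hX, hY⟩ ⟨X', hX', hY'⟩
    refine ⟨X * X', h𝔅.mul_mem hX hX', ?_⟩
    rintro _ ⟨u, hu, v, hv, rfl⟩
    exact ⟨φ u, hY u hu, φ v, hY' v hv, (happend u v).symm⟩

theorem add_kstar_le {K : Type*} [KleeneAlgebra K] (a b : K) :
    (a + b)∗ ≤ a∗ * (b * a∗)∗ := by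
  have one_le : 1 ≤ a∗ * (b * a∗)∗ :=
    one_le_kstar.trans (le_mul_of_one_le_right' one_le_kstar)
  refine kstar_le_of_mul_le_right one_le ?_
  rw [add_mul]
  refine add_le ?_ ?_
  · rw [← mul_assoc]
    gcongr
    exact mul_kstar_le_kstar
  · rw [← mul_assoc]
    exact mul_kstar_le_kstar.trans (le_mul_of_one_le_left' one_le_kstar)

variable [Monoid N] {α : List B → N} {𝔅 : Set (Language B)} {X : Language B}

theorem append_mem_kstar {u v : List B} (hu : u ∈ X∗) (hv : v ∈ X) : u ++ v ∈ X∗ := by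
  have hle : X∗ * X ≤ X∗ := kstar_mul_le_kstar
  exact hle (Language.append_mem_mul hu hv)

/-- The words of `X` whose value under `α` lies in `Z`. -/
def withValueIn (α : List B → N) (X : Language B) (Z : Set N) : Language B :=
  {w ∈ X | α w ∈ Z}

theorem eq_one_or_mem_of_mem_kstar (hα : IsMonoidMorphism α) {Z : Set N}
    (hZ : ∀ x ∈ Z, ∀ y ∈ Z, x * y ∈ Z) (hX : ∀ w ∈ X, α w ∈ Z) {w : List B} (hw : w ∈ X∗) :
    α w = 1 ∨ α w ∈ Z := by
  suffices X∗ ≤ {w | α w = 1 ∨ α w ∈ Z} from this hw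
  refine kstar_le_of_mul_le_left ?_ ?_
  · rintro _ rfl
    exact Or.inl hα.1
  · rintro _ ⟨u, hu, v, hv, rfl⟩
    right
    change α (u ++ v) ∈ Z
    rw [hα.2]
    rcases hu with hu | hu
    · rw [hu, one_mul]
      exact hX v hv
    · exact hZ _ hu _ (hX v hv)

theorem mul_apply_of_mem_kstar (hα : IsMonoidMorphism α) {p : N} (hX : ∀ w ∈ X, p * α w = p)
    {w : List B} (hw : w ∈ X∗) : p * α w = p := by
  have stable : ∀ x ∈ {x | p * x = p}, ∀ y ∈ {x | p * x = p}, x * y ∈ {x | p * x = p} :=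
    fun x hx y hy => by rw [mem_ofPred_eq, ← mul_assoc, hx.out, hy.out]
  rcases eq_one_or_mem_of_mem_kstar hα stable hX hw with h | h
  · rw [h, mul_one]
  · exact h

/-- The ideal contains the star of each of its members whose words are all mapped by `α` to the
same idempotent. -/
def IdempotentStarClosed (α : List B → N) (𝔅 : Set (Language B)) : Prop :=
  ∀ e : N, IsIdempotentElem e → ∀ X ∈ 𝔅, (∀ w ∈ X, α w = e) → X∗ ∈ 𝔅

theorem IsMulIdeal.kstar_mem_of_leftZero (h𝔅 : IsMulIdeal 𝔅) (hα : IsMonoidMorphism α)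
    (hstar : IdempotentStarClosed α 𝔅) {Z : Set N} (hfin : Z.Finite)
    (hZ : ∀ x ∈ Z, ∀ y ∈ Z, x * y = x) (hX : X ∈ 𝔅) (hXZ : ∀ w ∈ X, α w ∈ Z) : X∗ ∈ 𝔅 := by
  induction Z, hfin using Set.Finite.induction_on generalizing X with
  | empty =>
    have hX0 : X = 0 := Set.eq_empty_of_forall_notMem hXZ
    rw [hX0, kstar_zero]
    exact h𝔅.one_mem
  | @insert z Z _ _ ih =>
    have hZ' : ∀ x ∈ Z, ∀ y ∈ Z, x * y = x := fun x hx y hy => hZ x (.inr hx) y (.inr hy)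
    set X₁ := withValueIn α X Z
    set X₂ := withValueIn α X {z}
    have hX₁ : X₁∗ ∈ 𝔅 := ih hZ' (h𝔅.mem_of_le (fun _ hw => hw.1) hX) fun _ hw => hw.2
    have hX₂ : X₂ ∈ 𝔅 := h𝔅.mem_of_le (fun _ hw => hw.1) hX
    have value : ∀ w ∈ X₂ * X₁∗, α w = z := by
      rintro _ ⟨u, hu, v, hv, rfl⟩
      change α (u ++ v) = z
      rw [hα.2, hu.2]
      rcases eq_one_or_mem_of_mem_kstar hα (fun x hx y hy => by rwa [hZ' x hx y hy])
        (fun w (hw : w ∈ X₁) => hw.2) hv with h | h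
      · rw [h, mul_one]
      · exact hZ z (.inl rfl) _ (.inr h)
    have hX₂₁ : (X₂ * X₁∗)∗ ∈ 𝔅 :=
      hstar z (hZ z (.inl rfl) z (.inl rfl)) _ (h𝔅.mul_mem hX₂ hX₁) value
    have hle : X ≤ X₁ + X₂ := fun w hw => (hXZ w hw).symm.imp (⟨hw, ·⟩) (⟨hw, ·⟩)
    exact h𝔅.mem_of_le ((kstar_mono hle).trans (add_kstar_le X₁ X₂)) (h𝔅.mul_mem hX₁ hX₂₁)

/-- Runs of the right Cayley graph of `N` that start in the state `s`, read one word of `X` at a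
time, and have all their intermediate states (not the first, not the last) in `Y`. -/
inductive IsPath (α : List B → N) (X : Language B) (Y : Set N) (s : N) : List B → Prop
  | single {b : List B} : b ∈ X → IsPath α X Y s b
  | snoc {u b : List B} : IsPath α X Y s u → s * α u ∈ Y → b ∈ X → IsPath α X Y s (u ++ b)

/-- The language of the runs `IsPath`. -/
def paths (α : List B → N) (X : Language B) (Y : Set N) (s : N) : Language B :=
  {w | IsPath α X Y s w}

/-- The language of the runs `IsPath` that end in the state `p`. -/
def pathsTo (α : List B → N) (X : Language B) (Y : Set N) (s p : N) : Language B :=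
  {w ∈ paths α X Y s | s * α w = p}

theorem paths_empty_le (s : N) : paths α X ∅ s ≤ X := by
  rintro w (hw | ⟨-, h, -⟩)
  · exact hw
  · exact absurd h (Set.notMem_empty _)

theorem apply_mem_of_mem_paths (hα : IsMonoidMorphism α) {S Y : Set N}
    (hS : ∀ x ∈ S, ∀ y ∈ S, x * y ∈ S) (hX : ∀ w ∈ X, α w ∈ S) {s : N} {w : List B}
    (hw : w ∈ paths α X Y s) : α w ∈ S := by
  induction hw with
  | single hb => exact hX _ hb
  | snoc _ _ hb ih =>
    rw [hα.2]
    exact hS _ ih _ (hX _ hb)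

theorem paths_insert_le (hα : IsMonoidMorphism α) (Y : Set N) (s p : N) :
    paths α X (insert p Y) s ≤
      paths α X Y s + pathsTo α X Y s p * ((pathsTo α X Y p p)∗ * paths α X Y p) := by
  intro w hw
  induction hw with
  | single hb => exact Or.inl (.single hb)
  | @snoc w b _ hs hb ih =>
    rcases ih with hw | ⟨u, hu, _, ⟨v, hv, t, ht, rfl⟩, rfl⟩
    · rcases hs with hs | hs
      · exact Or.inr ⟨w, ⟨hw, hs⟩, b,
          ⟨[], Language.nil_mem_kstar _, b, .single hb, rfl⟩, rfl⟩
      · exact Or.inl (.snoc hw hs hb)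
    · have state : s * α (u ++ (v ++ t)) = p * α t := by
        rw [hα.2, hα.2, ← mul_assoc, ← mul_assoc, hu.2,
          mul_apply_of_mem_kstar hα (fun r (hr : r ∈ pathsTo α X Y p p) => hr.2) hv]
      change s * α (u ++ (v ++ t)) ∈ _ at hs
      rw [state] at hs
      right
      rcases hs with hs | hs
      · have hvt : v ++ t ∈ (pathsTo α X Y p p)∗ :=
          append_mem_kstar hv ⟨ht, hs⟩
        exact ⟨u, hu, _, ⟨v ++ t, hvt, b, .single hb, rfl⟩, by simp⟩
      · exact ⟨u, hu, _, ⟨v, hv, t ++ b, .snoc ht hs hb, rfl⟩, by simp⟩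

theorem IsMulIdeal.paths_mem (h𝔅 : IsMulIdeal 𝔅) (hα : IsMonoidMorphism α) (hX : X ∈ 𝔅)
    {Y : Set N} (hfin : Y.Finite)
    (hloop : ∀ p ∈ Y, ∀ Y' ⊆ Y, paths α X Y' p ∈ 𝔅 → (pathsTo α X Y' p p)∗ ∈ 𝔅) (s : N) :
    paths α X Y s ∈ 𝔅 := by
  induction Y, hfin using Set.Finite.induction_on generalizing s with
  | empty => exact h𝔅.mem_of_le (paths_empty_le s) hX
  | @insert p Y _ _ ih =>
    have ih' := ih fun q hq Y' hY' => hloop q (.inr hq) Y' (hY'.trans (Set.subset_insert _ _))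
    have loops : (pathsTo α X Y p p)∗ ∈ 𝔅 := hloop p (.inl rfl) Y (Set.subset_insert _ _) (ih' p)
    have hto : pathsTo α X Y s p ∈ 𝔅 := h𝔅.mem_of_le (fun _ hw => hw.1) (ih' s)
    exact h𝔅.mem_of_le (paths_insert_le hα Y s p)
      (h𝔅.add_mem (ih' s) (h𝔅.mul_mem hto (h𝔅.mul_mem loops (ih' p))))

theorem kstar_le_kstar_mul_paths (hα : IsMonoidMorphism α) {S : Set N}
    (hS : ∀ x ∈ S, ∀ y ∈ S, x * y ∈ S) (hX : ∀ w ∈ X, α w ∈ S) (Z : Set N) :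
    X∗ ≤ (withValueIn α (paths α X (S \ Z) 1) Z)∗ * (1 + paths α X (S \ Z) 1) := by
  set Q := withValueIn α (paths α X (S \ Z) 1) Z
  suffices h : X∗ ≤ Q∗ * (1 + withValueIn α (paths α X (S \ Z) 1) Zᶜ) by
    refine h.trans ?_
    gcongr
    exact fun w hw => hw.1
  refine kstar_le_of_mul_le_left ?_ ?_
  · exact one_le_kstar.trans (le_mul_of_one_le_right' le_self_add)
  · rintro _ ⟨_, ⟨u, hu, v, hv, rfl⟩, b, hb, rfl⟩
    have path : v ++ b ∈ paths α X (S \ Z) 1 := by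
      rcases hv with rfl | ⟨hv, hvZ⟩
      · exact .single hb
      · exact .snoc hv (by rw [one_mul]; exact ⟨apply_mem_of_mem_paths hα hS hX hv, hvZ⟩) hb
    by_cases hZ : α (v ++ b) ∈ Z
    · have huvb : u ++ (v ++ b) ∈ Q∗ :=
        append_mem_kstar hu ⟨path, hZ⟩
      exact ⟨_, huvb, [], Or.inl rfl, by simp⟩
    · exact ⟨u, hu, v ++ b, Or.inr ⟨path, hZ⟩, by simp⟩

/- Induction on the subsemigroup `S` generated by the values. Loops at a state `p` which is not a
left zero of `S` have their values in the stabiliser of `p`, which is smaller than `S`; the left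
zeros themselves form a band. -/
theorem IsMulIdeal.kstar_mem_of_subsemigroup [Finite N] (h𝔅 : IsMulIdeal 𝔅)
    (hα : IsMonoidMorphism α) (hstar : IdempotentStarClosed α 𝔅) (S : Set N)
    (hS : ∀ x ∈ S, ∀ y ∈ S, x * y ∈ S) (hX : X ∈ 𝔅) (hXS : ∀ w ∈ X, α w ∈ S) : X∗ ∈ 𝔅 := by
  induction S using WellFoundedLT.induction generalizing X with
  | ind S ih =>
    set Z : Set N := {z ∈ S | ∀ x ∈ S, z * x = z}
    have stabilizer_lt : ∀ p ∈ S \ Z, {x ∈ S | p * x = p} < S := fun p hp =>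
      ⟨fun x hx => hx.1, fun hsub => hp.2 ⟨hp.1, fun x hx => (hsub hx).2⟩⟩
    have stabilizer_mul : ∀ p, ∀ x ∈ {x ∈ S | p * x = p}, ∀ y ∈ {x ∈ S | p * x = p},
        x * y ∈ {x ∈ S | p * x = p} := fun p x hx y hy =>
      ⟨hS x hx.1 y hy.1, by rw [← mul_assoc, hx.2, hy.2]⟩
    have loops : ∀ p ∈ S \ Z, ∀ Y' ⊆ S \ Z, paths α X Y' p ∈ 𝔅 → (pathsTo α X Y' p p)∗ ∈ 𝔅 :=
      fun p hp Y' _ hY' => ih _ (stabilizer_lt p hp) (stabilizer_mul p)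
        (h𝔅.mem_of_le (fun _ hw => hw.1) hY')
        fun w hw => ⟨apply_mem_of_mem_paths hα hS hXS hw.1, hw.2⟩
    have runs : paths α X (S \ Z) 1 ∈ 𝔅 := h𝔅.paths_mem hα hX (Set.toFinite _) loops 1
    have zeros : (withValueIn α (paths α X (S \ Z) 1) Z)∗ ∈ 𝔅 :=
      h𝔅.kstar_mem_of_leftZero hα hstar (Set.toFinite Z) (fun x hx y hy => hx.2 y hy.1)
        (h𝔅.mem_of_le (fun _ hw => hw.1) runs) fun w hw => hw.2
    exact h𝔅.mem_of_le (kstar_le_kstar_mul_paths hα hS hXS Z)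
      (h𝔅.mul_mem zeros (h𝔅.add_mem h𝔅.one_mem runs))

theorem IsMulIdeal.kstar_mem [Finite N] (h𝔅 : IsMulIdeal 𝔅) (hα : IsMonoidMorphism α)
    (hstar : IdempotentStarClosed α 𝔅) (hX : X ∈ 𝔅) : X∗ ∈ 𝔅 :=
  h𝔅.kstar_mem_of_subsemigroup hα hstar Set.univ (fun _ _ _ _ => trivial) hX fun _ _ => trivial

/-- The language of one-letter words. -/
def letters (B : Type) : Language B := {w | w.length = 1}

theorem top_le_kstar_letters : (⊤ : Language B) ≤ (letters B)∗ := by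
  intro w _
  have hw : w = (w.map ([·])).flatten := by rw [← List.flatMap_def, List.flatMap_singleton']
  refine Language.mem_kstar.2 ⟨w.map ([·]), hw, fun y hy => ?_⟩
  obtain ⟨a, -, rfl⟩ := List.mem_map.1 hy
  rfl

theorem IsMulIdeal.top_mem [Finite N] (h𝔅 : IsMulIdeal 𝔅) (hα : IsMonoidMorphism α)
    (hstar : IdempotentStarClosed α 𝔅) (hletters : letters B ∈ 𝔅) :
    ⊤ ∈ 𝔅 :=
  h𝔅.mem_of_le top_le_kstar_letters (h𝔅.kstar_mem hα hstar hletters)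

end MulIdeals

/-! ### Idempotent infixes -/

section IdempotentInfixes

variable {B N : Type} [Monoid N] {α : List B → N}

/-- The languages all of whose words that are long enough have a nonempty infix with idempotent
value. -/
def longHaveIdempotentInfix (α : List B → N) : Set (Language B) :=
  {X | ∃ n, ∀ w ∈ X, w.length ≤ n ∨ ∃ y, y <:+: w ∧ y ≠ [] ∧ IsIdempotentElem (α y)}

theorem isMulIdeal_longHaveIdempotentInfix (α : List B → N) :
    IsMulIdeal (longHaveIdempotentInfix α) where
  one_mem := ⟨0, by rintro _ rfl; exact .inl le_rfl⟩
  mem_of_le := fun hle ⟨n, hn⟩ => ⟨n, fun w hw => hn w (hle hw)⟩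
  add_mem := by
    rintro X Y ⟨n, hn⟩ ⟨m, hm⟩
    refine ⟨max n m, ?_⟩
    rintro w (hw | hw)
    · exact (hn w hw).imp_left (le_max_of_le_left ·)
    · exact (hm w hw).imp_left (le_max_of_le_right ·)
  mul_mem := by
    rintro X Y ⟨n, hn⟩ ⟨m, hm⟩
    refine ⟨n + m, ?_⟩
    rintro _ ⟨u, hu, v, hv, rfl⟩
    rcases hn u hu with hu | ⟨y, hy, hy'⟩
    · rcases hm v hv with hv | ⟨y, hy, hy'⟩
      · left
        change (u ++ v).length ≤ n + m
        rw [List.length_append]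
        exact add_le_add hu hv
      · exact .inr ⟨y, hy.trans (List.suffix_append u v).isInfix, hy'⟩
    · exact .inr ⟨y, hy.trans (List.prefix_append u v).isInfix, hy'⟩

theorem idempotentStarClosed_longHaveIdempotentInfix (α : List B → N) :
    IdempotentStarClosed α (longHaveIdempotentInfix α) := by
  intro e he X _ hX
  refine ⟨0, fun w hw => ?_⟩
  obtain ⟨l, rfl, hl⟩ := Language.mem_kstar_iff_exists_nonempty.1 hw
  cases l with
  | nil => exact .inl le_rfl
  | cons y l =>
    obtain ⟨hy, hy_ne⟩ := hl y List.mem_cons_self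
    exact .inr ⟨y, (List.prefix_append y l.flatten).isInfix, hy_ne, by rwa [hX y hy]⟩

theorem exists_idempotent_infix [Finite N] (hα : IsMonoidMorphism α) :
    ∃ n, ∀ w : List B, n ≤ w.length →
      ∃ y, y <:+: w ∧ y ≠ [] ∧ y.length ≤ n ∧ IsIdempotentElem (α y) := by
  obtain ⟨n, hn⟩ := (isMulIdeal_longHaveIdempotentInfix α).top_mem hα
    (idempotentStarClosed_longHaveIdempotentInfix α) ⟨1, fun w hw => .inl (le_of_eq hw)⟩
  refine ⟨n + 1, fun w hw => ?_⟩
  rcases hn (w.take (n + 1)) trivial with h | ⟨y, hy, hy_ne, hy_idem⟩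
  · rw [List.length_take_of_le hw] at h
    omega
  · exact ⟨y, hy.trans (List.take_prefix _ w).isInfix, hy_ne,
      hy.length_le.trans (List.length_take_le _ _), hy_idem⟩

/-- The words none of whose infixes belongs to `S`. -/
def avoiding (S : Language B) : Language B := {w | ∀ y, y <:+: w → y ∉ S}

variable {S : Language B}

theorem exists_infix_of_notMem_avoiding {w : List B} (hw : w ∉ avoiding S) :
    ∃ s, s <:+: w ∧ s ∈ S := by
  by_contra! h
  exact hw h

theorem mem_avoiding_or_exists_leftmost (hS : [] ∉ S) (w : List B) :
    w ∈ avoiding S ∨ ∃ u ∈ avoiding S, ∃ s ∈ S, ∃ v, w = u ++ (s ++ v) := by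
  induction hn : w.length using Nat.strong_induction_on generalizing w with
  | _ n ih =>
    by_cases hw : w ∈ avoiding S
    · exact .inl hw
    right
    obtain ⟨s, ⟨u, v, rfl⟩, hs⟩ := exists_infix_of_notMem_avoiding hw
    have hs_pos : 0 < s.length := List.length_pos_iff.2 fun h => hS (h ▸ hs)
    rcases ih u.length (by simp at hn; omega) u rfl with hu | ⟨u', hu', s', hs', v', rfl⟩
    · exact ⟨u, hu, s, hs, v, by simp⟩
    · exact ⟨u', hu', s', hs', v' ++ (s ++ v), by simp⟩

theorem mem_avoiding_or_exists_rightmost (hS : [] ∉ S) (w : List B) :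
    w ∈ avoiding S ∨ ∃ u, ∃ s ∈ S, ∃ v ∈ avoiding S, w = u ++ (s ++ v) := by
  induction hn : w.length using Nat.strong_induction_on generalizing w with
  | _ n ih =>
    by_cases hw : w ∈ avoiding S
    · exact .inl hw
    right
    obtain ⟨s, ⟨u, v, rfl⟩, hs⟩ := exists_infix_of_notMem_avoiding hw
    have hs_pos : 0 < s.length := List.length_pos_iff.2 fun h => hS (h ▸ hs)
    rcases ih v.length (by simp at hn; omega) v rfl with hv | ⟨u', s', hs', v', hv', rfl⟩
    · exact ⟨u, s, hs, v, hv, by simp⟩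
    · exact ⟨u ++ (s ++ u'), s', hs', v', hv', by simp⟩

theorem mem_avoiding_or_exists_middle (hS : [] ∉ S) (w : List B) :
    w ∈ avoiding S ∨
      ∃ u ∈ avoiding S, ∃ t ∈ S + S * ⊤ * S, ∃ v ∈ avoiding S, w = u ++ (t ++ v) := by
  refine (mem_avoiding_or_exists_leftmost hS w).imp_right ?_
  rintro ⟨u, hu, s, hs, v, rfl⟩
  rcases mem_avoiding_or_exists_rightmost hS v with hv | ⟨x, s', hs', v', hv', rfl⟩
  · exact ⟨u, hu, s, .inl hs, v, hv, rfl⟩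
  · have hmid : s ++ x ++ s' ∈ S * ⊤ * S :=
      Language.append_mem_mul (Language.append_mem_mul hs trivial) hs'
    exact ⟨u, hu, s ++ x ++ s', .inr hmid, v', hv', by simp⟩

/-- The nonempty words of length at most `n` and value `F`. -/
def shortWithValue (α : List B → N) (n : ℕ) (F : N) : Language B :=
  {y | y ≠ [] ∧ y.length ≤ n ∧ α y = F}

/-- The words whose nonempty infixes of length at most `n` and of idempotent value all have their
value in `𝓕`. -/
def idempotentsIn (α : List B → N) (n : ℕ) (𝓕 : Set N) : Language B :=
  {w | ∀ y, y <:+: w → y ≠ [] → y.length ≤ n → IsIdempotentElem (α y) → α y ∈ 𝓕}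

theorem mem_idempotentsIn_of_infix {n : ℕ} {𝓕 : Set N} {F : N} {u w : List B}
    (hw : w ∈ idempotentsIn α n (insert F 𝓕)) (hu : u <:+: w)
    (havoid : u ∈ avoiding (shortWithValue α n F)) : u ∈ idempotentsIn α n 𝓕 :=
  fun y hy hy_ne hy_len hy_idem =>
    (hw y (hy.trans hu) hy_ne hy_len hy_idem).resolve_left fun h => havoid y hy ⟨hy_ne, hy_len, h⟩

theorem idempotentsIn_insert_le (n : ℕ) (𝓕 : Set N) (F : N) :
    idempotentsIn α n (insert F 𝓕) ≤ idempotentsIn α n 𝓕 +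
      idempotentsIn α n 𝓕 * ((shortWithValue α n F +
        shortWithValue α n F * ⊤ * shortWithValue α n F) * idempotentsIn α n 𝓕) := by
  intro w hw
  rcases mem_avoiding_or_exists_middle (S := shortWithValue α n F) (fun h => h.1 rfl) w with
    h | ⟨u, hu, t, ht, v, hv, rfl⟩
  · exact .inl (mem_idempotentsIn_of_infix hw List.infix_rfl h)
  · have hu' : u ∈ idempotentsIn α n 𝓕 :=
      mem_idempotentsIn_of_infix hw (List.prefix_append u _).isInfix hu
    have hv' : v ∈ idempotentsIn α n 𝓕 :=
      mem_idempotentsIn_of_infix hw ⟨u ++ t, [], by simp⟩ hv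
    exact .inr (Language.append_mem_mul hu' (Language.append_mem_mul ht hv'))

variable {𝔅 : Set (Language B)}

theorem IsMulIdeal.length_le_mem (h𝔅 : IsMulIdeal 𝔅) (hletters : letters B ∈ 𝔅) (n : ℕ) :
    ({w | w.length ≤ n} : Language B) ∈ 𝔅 := by
  induction n with
  | zero => exact h𝔅.mem_of_le (fun w hw => List.length_eq_zero_iff.1 (Nat.le_zero.1 hw)) h𝔅.one_mem
  | succ n ih =>
    refine h𝔅.mem_of_le ?_ (h𝔅.add_mem h𝔅.one_mem (h𝔅.mul_mem hletters ih))
    rintro (_ | ⟨a, w⟩) hw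
    · exact .inl rfl
    · exact .inr ⟨[a], rfl, w, Nat.le_of_succ_le_succ hw, rfl⟩

theorem IsMulIdeal.top_mem_of_sandwich [Finite N] (h𝔅 : IsMulIdeal 𝔅) (hα : IsMonoidMorphism α)
    (hletters : letters B ∈ 𝔅)
    (hsandwich : ∀ F, IsIdempotentElem F → ∀ n,
      shortWithValue α n F * ⊤ * shortWithValue α n F ∈ 𝔅) : ⊤ ∈ 𝔅 := by
  obtain ⟨n, hn⟩ := exists_idempotent_infix hα
  suffices h : ∀ 𝓕 : Set N, idempotentsIn α n 𝓕 ∈ 𝔅 from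
    h𝔅.mem_of_le (Y := idempotentsIn α n univ) (fun _ _ _ _ _ _ _ => trivial) (h univ)
  intro 𝓕
  induction 𝓕, Set.toFinite 𝓕 using Set.Finite.induction_on with
  | empty =>
    refine h𝔅.mem_of_le (fun w hw => ?_) (h𝔅.length_le_mem hletters n)
    by_contra hlen
    obtain ⟨y, hy, hy_ne, hy_len, hy_idem⟩ := hn w (le_of_not_ge hlen)
    exact hw y hy hy_ne hy_len hy_idem
  | @insert F 𝓕 _ _ ih =>
    by_cases hF : IsIdempotentElem F
    · have hshort : shortWithValue α n F ∈ 𝔅 :=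
        h𝔅.mem_of_le (fun y hy => hy.2.1) (h𝔅.length_le_mem hletters n)
      exact h𝔅.mem_of_le (idempotentsIn_insert_le n 𝓕 F) (h𝔅.add_mem ih
        (h𝔅.mul_mem ih (h𝔅.mul_mem (h𝔅.add_mem hshort (hsandwich F hF n)) ih)))
    · refine h𝔅.mem_of_le (X := idempotentsIn α n (insert F 𝓕)) ?_ ih
      intro w hw y hy hy_ne hy_len hy_idem
      refine (hw y hy hy_ne hy_len hy_idem).resolve_left ?_
      rintro rfl
      exact hF hy_idem

end IdempotentInfixes

/-! ### Polynomial closure -/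

section PolynomialClosure

variable {𝒞 𝒟 : LClass A} {u u' v v' w : List A} {K L : Lang A}

theorem sInter_mem_of_finite (huniv : univ ∈ 𝒟) (hinter : ∀ K L : Lang A, K ∈ 𝒟 → L ∈ 𝒟 → K ∩ L ∈ 𝒟)
    {s : Set (Lang A)} (hs : s.Finite) (hsub : s ⊆ 𝒟) : ⋂₀ s ∈ 𝒟 := by
  induction s, hs using Set.Finite.induction_on with
  | empty => rwa [sInter_empty]
  | insert _ _ ih =>
    rw [sInter_insert]
    exact hinter _ _ (hsub (.inl rfl)) (ih fun _ hx => hsub (.inr hx))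

theorem sUnion_mem_of_finite (hempty : ∅ ∈ 𝒟) (hunion : ∀ K L : Lang A, K ∈ 𝒟 → L ∈ 𝒟 → K ∪ L ∈ 𝒟)
    {s : Set (Lang A)} (hs : s.Finite) (hsub : s ⊆ 𝒟) : ⋃₀ s ∈ 𝒟 := by
  induction s, hs using Set.Finite.induction_on with
  | empty => rwa [sUnion_empty]
  | insert _ _ ih =>
    rw [sUnion_insert]
    exact hunion _ _ (hsub (.inl rfl)) (ih fun _ hx => hsub (.inr hx))

theorem ceq.refl (𝒞 : LClass A) (w : List A) : ceq 𝒞 w w := fun _ _ => Iff.rfl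

theorem ceq.symm (h : ceq 𝒞 u v) : ceq 𝒞 v u := fun L hL => (h L hL).symm

theorem ceq.trans (h : ceq 𝒞 u v) (h' : ceq 𝒞 v w) : ceq 𝒞 u w :=
  fun L hL => (h L hL).trans (h' L hL)

theorem ceq.append (hqc : QuotientClosed 𝒞) (h : ceq 𝒞 u u') (h' : ceq 𝒞 v v') :
    ceq 𝒞 (u ++ v) (u' ++ v') :=
  fun L hL => (h' _ (hqc L hL u).1).trans (h _ (hqc L hL v').2)

theorem cclass_eq_iff : cclass 𝒞 u = cclass 𝒞 v ↔ ceq 𝒞 u v := by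
  refine ⟨fun h => (h ▸ ceq.refl 𝒞 v : v ∈ cclass 𝒞 u), fun h => ?_⟩
  ext x
  exact ⟨h.symm.trans, h.trans⟩

theorem cmul_cclass (hqc : QuotientClosed 𝒞) (u v : List A) :
    cmul 𝒞 (cclass 𝒞 u) (cclass 𝒞 v) = cclass 𝒞 (u ++ v) := by
  ext x
  constructor
  · rintro ⟨u', hu, v', hv, h⟩
    exact (ceq.append hqc hu hv).trans h
  · exact fun h => ⟨u, ceq.refl 𝒞 u, v, ceq.refl 𝒞 v, h⟩

theorem cclass_eq_inter (𝒞 : LClass A) (w : List A) :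
    cclass 𝒞 w = ⋂₀ {X ∈ 𝒞 | w ∈ X} ∩ ⋂₀ (compl '' {X ∈ 𝒞 | w ∉ X}) := by
  ext v
  constructor
  · refine fun h => ⟨fun X hX => (h X hX.1).1 hX.2, ?_⟩
    rintro _ ⟨X, hX, rfl⟩ hv
    exact hX.2 ((h X hX.1).2 hv)
  · rintro ⟨h, h'⟩ X hX
    refine ⟨fun hw => h X ⟨hX, hw⟩, fun hv => ?_⟩
    by_contra hw
    exact h' Xᶜ ⟨X, ⟨hX, hw⟩, rfl⟩ hv

theorem cclass_mem (hfin : 𝒞.Finite) (h𝒟 : LangBoolAlg 𝒟) (hsub : 𝒞 ⊆ 𝒟) (w : List A) :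
    cclass 𝒞 w ∈ 𝒟 := by
  obtain ⟨⟨-, huniv, -, hinter⟩, hcompl⟩ := h𝒟
  rw [cclass_eq_inter]
  refine hinter _ _ ?_ ?_
  · exact sInter_mem_of_finite huniv hinter (hfin.subset fun _ hX => hX.1) fun _ hX => hsub hX.1
  · refine sInter_mem_of_finite huniv hinter ((hfin.subset fun _ hX => hX.1).image _) ?_
    rintro _ ⟨X, hX, rfl⟩
    exact hcompl _ (hsub hX.1)

theorem finite_range_cclass (hfin : 𝒞.Finite) : (range (cclass 𝒞)).Finite := by
  refine (hfin.finite_subsets.image fun s => ⋂₀ s ∩ ⋂₀ (compl '' (𝒞 \ s))).subset ?_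
  rintro _ ⟨w, rfl⟩
  refine ⟨{X ∈ 𝒞 | w ∈ X}, fun _ hX => hX.1, ?_⟩
  have hdiff : 𝒞 \ {X ∈ 𝒞 | w ∈ X} = {X ∈ 𝒞 | w ∉ X} :=
    Set.ext fun X => ⟨fun h => ⟨h.1, fun hw => h.2 ⟨h.1, hw⟩⟩, fun h => ⟨h.1, fun h' => h.2 h'.2⟩⟩
  change ⋂₀ _ ∩ ⋂₀ (compl '' (𝒞 \ {X ∈ 𝒞 | w ∈ X})) = _
  rw [hdiff, ← cclass_eq_inter]

theorem PolC.of_mem (h : K ∈ 𝒞) : K ∈ PolC 𝒞 := fun _ h𝒟 => h𝒟.1 h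

theorem PolC.union (hK : K ∈ PolC 𝒞) (hL : L ∈ PolC 𝒞) : K ∪ L ∈ PolC 𝒞 :=
  fun 𝒟 h𝒟 => h𝒟.2.1 _ _ (hK 𝒟 h𝒟) (hL 𝒟 h𝒟)

theorem PolC.mcat (a : A) (hK : K ∈ PolC 𝒞) (hL : L ∈ PolC 𝒞) : mcat K a L ∈ PolC 𝒞 :=
  fun 𝒟 h𝒟 => h𝒟.2.2 _ _ a (hK 𝒟 h𝒟) (hL 𝒟 h𝒟)

/-- The largest language `X` such that `[u] a X ⊆ L`. -/
def classResidual (𝒞 : LClass A) (u : List A) (a : A) (L : Lang A) : Lang A :=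
  {t | ∀ u' ∈ cclass 𝒞 u, u' ++ a :: t ∈ L}

/-- `IsPolInterior 𝒞 n L w` says that `w` belongs to a product `[u₁] a₁ ⋯ [uₘ] aₘ [v]` of at most
`n + 1` many `∼_𝒞`-classes which is contained in `L`. -/
inductive IsPolInterior (𝒞 : LClass A) : ℕ → Lang A → List A → Prop
  | of_cclass_subset {n : ℕ} {L : Lang A} {w : List A} : cclass 𝒞 w ⊆ L → IsPolInterior 𝒞 n L w
  | mcat {n : ℕ} {L : Lang A} {u : List A} {a : A} {v : List A} :
      IsPolInterior 𝒞 n (classResidual 𝒞 u a L) v → IsPolInterior 𝒞 (n + 1) L (u ++ a :: v)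

theorem IsPolInterior.mem {n : ℕ} (h : IsPolInterior 𝒞 n L w) : w ∈ L := by
  induction h with
  | of_cclass_subset h => exact h (ceq.refl 𝒞 _)
  | mcat _ ih => exact ih _ (ceq.refl 𝒞 _)

theorem IsPolInterior.mono {n m : ℕ} (h : IsPolInterior 𝒞 n K w) (hnm : n ≤ m) (hKL : K ⊆ L) :
    IsPolInterior 𝒞 m L w := by
  induction h generalizing m L with
  | of_cclass_subset h => exact .of_cclass_subset (h.trans hKL)
  | mcat _ ih =>
    obtain ⟨m, rfl⟩ := Nat.exists_eq_succ_of_ne_zero (by omega : m ≠ 0)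
    exact .mcat (ih (Nat.le_of_succ_le_succ hnm) fun t ht u' hu' => hKL (ht u' hu'))

theorem IsPolInterior.inter_cclass (hqc : QuotientClosed 𝒞) {n : ℕ}
    (h : IsPolInterior 𝒞 n L w) : IsPolInterior 𝒞 n (L ∩ cclass 𝒞 w) w := by
  induction h with
  | of_cclass_subset h => exact .of_cclass_subset (subset_inter h subset_rfl)
  | mcat _ ih =>
    exact .mcat (ih.mono le_rfl fun t ht u' hu' =>
      ⟨ht.1 u' hu', ceq.append hqc hu' (ceq.append hqc (ceq.refl 𝒞 [_]) ht.2)⟩)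

theorem isPolInterior_mcat {n m : ℕ} (a : A) (hK : IsPolInterior 𝒞 n K u)
    (hL : IsPolInterior 𝒞 m L v) : IsPolInterior 𝒞 (n + m + 1) (mcat K a L) (u ++ a :: v) := by
  induction hK with
  | of_cclass_subset hK =>
    exact .mcat (hL.mono (by omega) fun t ht u' hu' => ⟨u', hK hu', t, ht, rfl⟩)
  | @mcat n K x b y _ ih =>
    rw [List.append_assoc, List.cons_append]
    refine .mcat (ih.mono (by omega) ?_)
    rintro _ ⟨y', hy', t, ht, rfl⟩ x' hx'
    exact ⟨x' ++ b :: y', hy' x' hx', t, ht, by simp⟩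

theorem IsPolInterior.split_residual (hqc : QuotientClosed 𝒞) {n : ℕ} {a b : A}
    (h : IsPolInterior 𝒞 n (classResidual 𝒞 (u ++ a :: v) b L) w) :
    IsPolInterior 𝒞 (n + 1) (classResidual 𝒞 u a L) (v ++ b :: w) := by
  refine .mcat (h.mono le_rfl fun t ht v' hv' u' hu' => ?_)
  simpa using ht (u' ++ a :: v') (ceq.append hqc hu' (ceq.append hqc (ceq.refl 𝒞 [a]) hv'))

/- Both products start with a class and a letter; the one whose first letter sits further to the
left in `w` is peeled off. -/
theorem IsPolInterior.inter (hqc : QuotientClosed 𝒞) {n m : ℕ} (hK : IsPolInterior 𝒞 n K w)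
    (hL : IsPolInterior 𝒞 m L w) : IsPolInterior 𝒞 (n + m) (K ∩ L) w := by
  induction hlen : w.length using Nat.strong_induction_on generalizing n m K L w with
  | _ len ih =>
    have peel : ∀ {n m : ℕ} {K L : Lang A} {x : List A} {a : A} {v : List A}, v.length < len →
        IsPolInterior 𝒞 n (classResidual 𝒞 x a K) v →
        IsPolInterior 𝒞 m (classResidual 𝒞 x a L) v →
        IsPolInterior 𝒞 (n + m + 1) (K ∩ L) (x ++ a :: v) := fun hlt hK hL =>
      .mcat ((ih _ hlt hK hL rfl).mono le_rfl fun t ht u' hu' => ⟨ht.1 u' hu', ht.2 u' hu'⟩)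
    cases hK with
    | of_cclass_subset hK =>
      rw [inter_comm]
      exact (hL.inter_cclass hqc).mono (by omega) (inter_subset_inter_right _ hK)
    | @mcat n _ x a v hv => ?_
    have hvlen : v.length < len := by
      simp only [← hlen, List.length_append, List.length_cons]
      omega
    generalize hw : x ++ a :: v = w at *
    cases hL with
    | of_cclass_subset hL =>
      subst hw
      exact ((IsPolInterior.mcat hv).inter_cclass hqc).mono (by omega)
        (inter_subset_inter_right _ hL)
    | @mcat m _ y b t ht => ?_
    have htlen : t.length < len := by
      simp only [← hlen, List.length_append, List.length_cons]
      omega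
    rcases List.append_eq_append_iff.1 hw with ⟨_ | ⟨c, z⟩, rfl, hz⟩ | ⟨_ | ⟨c, z⟩, rfl, hz⟩ <;>
      obtain ⟨rfl, rfl⟩ := List.cons.inj hz
    · rw [List.append_nil] at ht ⊢
      exact (peel htlen hv ht).mono (by omega) subset_rfl
    · rw [List.append_assoc]
      exact (peel hvlen hv (ht.split_residual hqc)).mono (by omega) subset_rfl
    · rw [List.append_nil] at hv
      exact (peel htlen hv ht).mono (by omega) subset_rfl
    · rw [inter_comm]
      exact (peel htlen ht (hv.split_residual hqc)).mono (by omega) subset_rfl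

theorem exists_isPolInterior_of_mem_PolC (hK : K ∈ PolC 𝒞) :
    ∃ n, ∀ w ∈ K, IsPolInterior 𝒞 n K w := by
  refine hK {K | ∃ n, ∀ w ∈ K, IsPolInterior 𝒞 n K w} ⟨?_, ?_, ?_⟩
  · exact fun K hK => ⟨0, fun w hw => .of_cclass_subset fun v hv => (hv K hK).1 hw⟩
  · rintro K L ⟨n, hn⟩ ⟨m, hm⟩
    refine ⟨max n m, ?_⟩
    rintro w (hw | hw)
    · exact (hn w hw).mono (le_max_left n m) subset_union_left
    · exact (hm w hw).mono (le_max_right n m) subset_union_right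
  · rintro K L a ⟨n, hn⟩ ⟨m, hm⟩
    refine ⟨n + m + 1, ?_⟩
    rintro _ ⟨u, hu, v, hv, rfl⟩
    exact isPolInterior_mcat a (hn u hu) (hm v hv)

theorem isPolInterior_succ_iff {n : ℕ} : IsPolInterior 𝒞 (n + 1) L w ↔ cclass 𝒞 w ⊆ L ∨
    ∃ D ∈ range (cclass 𝒞), ∃ a, w ∈ mcat D a
      {v | IsPolInterior 𝒞 n {t | ∀ u ∈ D, u ++ a :: t ∈ L} v} := by
  constructor
  · rintro (h | @⟨_, _, u, a, v, h⟩)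
    · exact .inl h
    · exact .inr ⟨_, ⟨u, rfl⟩, a, u, ceq.refl 𝒞 u, v, h, rfl⟩
  · rintro (h | ⟨_, ⟨x, rfl⟩, a, u, hu, v, hv, rfl⟩)
    · exact .of_cclass_subset h
    · refine .mcat (?_ : IsPolInterior 𝒞 n (classResidual 𝒞 u a L) v)
      rwa [classResidual, ← cclass_eq_iff.2 hu]

theorem setOf_cclass_subset_mem (hfin : 𝒞.Finite) (hba : LangBoolAlg 𝒞) (L : Lang A) :
    {w | cclass 𝒞 w ⊆ L} ∈ 𝒞 := by
  have hunion : {w | cclass 𝒞 w ⊆ L} = ⋃₀ {D ∈ range (cclass 𝒞) | D ⊆ L} := by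
    ext w
    refine ⟨fun h => ⟨_, ⟨⟨w, rfl⟩, h⟩, ceq.refl 𝒞 w⟩, ?_⟩
    rintro ⟨_, ⟨⟨v, rfl⟩, h⟩, hw⟩
    exact (cclass_eq_iff.2 hw).symm.subset.trans h
  rw [hunion]
  refine sUnion_mem_of_finite hba.1.1 hba.1.2.2.1
    ((finite_range_cclass hfin).subset fun _ h => h.1) ?_
  rintro _ ⟨⟨v, rfl⟩, -⟩
  exact cclass_mem hfin hba subset_rfl v

theorem setOf_isPolInterior_mem_PolC [Finite A] (hfin : 𝒞.Finite) (hba : LangBoolAlg 𝒞) (n : ℕ)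
    (L : Lang A) : {w | IsPolInterior 𝒞 n L w} ∈ PolC 𝒞 := by
  induction n generalizing L with
  | zero =>
    convert PolC.of_mem (setOf_cclass_subset_mem hfin hba L) using 1
    ext w
    exact ⟨fun | .of_cclass_subset h => h, .of_cclass_subset⟩
  | succ n ih =>
    let product : Lang A × A → Lang A := fun p =>
      mcat p.1 p.2 {v | IsPolInterior 𝒞 n {t | ∀ u ∈ p.1, u ++ p.2 :: t ∈ L} v}
    have hset : {w | IsPolInterior 𝒞 (n + 1) L w} =
        {w | cclass 𝒞 w ⊆ L} ∪ ⋃₀ (product '' (range (cclass 𝒞) ×ˢ univ)) := by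
      ext w
      refine isPolInterior_succ_iff.trans (or_congr_right ⟨?_, ?_⟩)
      · exact fun ⟨D, hD, a, h⟩ => ⟨_, ⟨(D, a), ⟨hD, trivial⟩, rfl⟩, h⟩
      · rintro ⟨_, ⟨⟨D, a⟩, ⟨hD, -⟩, rfl⟩, h⟩
        exact ⟨D, hD, a, h⟩
    rw [hset]
    refine PolC.union (PolC.of_mem (setOf_cclass_subset_mem hfin hba L))
      (sUnion_mem_of_finite (PolC.of_mem hba.1.1) (fun _ _ => PolC.union)
        (((finite_range_cclass hfin).prod finite_univ).image _) ?_)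
    rintro _ ⟨⟨_, a⟩, ⟨⟨u, rfl⟩, -⟩, rfl⟩
    exact PolC.mcat a (PolC.of_mem (cclass_mem hfin hba subset_rfl u)) (ih _)

theorem PolC.inter [Finite A] (hfin : 𝒞.Finite) (hba : LangBoolAlg 𝒞) (hqc : QuotientClosed 𝒞)
    (hK : K ∈ PolC 𝒞) (hL : L ∈ PolC 𝒞) : K ∩ L ∈ PolC 𝒞 := by
  obtain ⟨n, hn⟩ := exists_isPolInterior_of_mem_PolC hK
  obtain ⟨m, hm⟩ := exists_isPolInterior_of_mem_PolC hL
  convert setOf_isPolInterior_mem_PolC hfin hba (n + m) (K ∩ L) using 1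
  ext w
  exact ⟨fun hw => (hn w hw.1).inter hqc (hm w hw.2), IsPolInterior.mem⟩

end PolynomialClosure

/-! ### Stratification of the polynomial closure -/

section Stratification

variable {𝒞 : LClass A} {k m : ℕ} {u u' v v' w x : List A} {K L : Lang A}

/-- The stratification of the canonical preorder of `PolC 𝒞`: `polLE 𝒞 k w w'` holds when `w'`
belongs to every language which contains `w` and is built from `𝒞` by unions, intersections and at
most `k` nested marked concatenations. -/
def polLE (𝒞 : LClass A) : ℕ → List A → List A → Prop
  | 0, w, w' => ceq 𝒞 w w'
  | k + 1, w, w' => polLE 𝒞 k w w' ∧ ∀ u a v, u ++ a :: v = w →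
      ∃ u' v', u' ++ a :: v' = w' ∧ polLE 𝒞 k u u' ∧ polLE 𝒞 k v v'

theorem polLE.refl (𝒞 : LClass A) (k : ℕ) (w : List A) : polLE 𝒞 k w w := by
  induction k generalizing w with
  | zero => exact ceq.refl 𝒞 w
  | succ k ih => exact ⟨ih w, fun u _ v h => ⟨u, v, h, ih u, ih v⟩⟩

theorem polLE.trans (h : polLE 𝒞 k u v) (h' : polLE 𝒞 k v w) : polLE 𝒞 k u w := by
  induction k generalizing u v w with
  | zero => exact ceq.trans h h'
  | succ k ih =>
    refine ⟨ih h.1 h'.1, fun x a y hxy => ?_⟩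
    obtain ⟨x', y', hxy', hx, hy⟩ := h.2 x a y hxy
    obtain ⟨x'', y'', hxy'', hx', hy'⟩ := h'.2 x' a y' hxy'
    exact ⟨x'', y'', hxy'', ih hx hx', ih hy hy'⟩

theorem polLE.of_le (hkm : k ≤ m) (h : polLE 𝒞 m u v) : polLE 𝒞 k u v := by
  induction m, hkm using Nat.le_induction with
  | base => exact h
  | succ m _ ih => exact ih h.1

theorem polLE.ceq (h : polLE 𝒞 k u v) : ceq 𝒞 u v := h.of_le (Nat.zero_le k)

theorem polLE.append (hqc : QuotientClosed 𝒞) (h : polLE 𝒞 k u u') (h' : polLE 𝒞 k v v') :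
    polLE 𝒞 k (u ++ v) (u' ++ v') := by
  induction k generalizing u u' v v' with
  | zero => exact ceq.append hqc h h'
  | succ k ih =>
    have split_right : ∀ z a y, z ++ a :: y = v → ∃ x' y', x' ++ a :: y' = u' ++ v' ∧
        polLE 𝒞 k (u ++ z) x' ∧ polLE 𝒞 k y y' := by
      intro z a y hzy
      obtain ⟨z', y', rfl, hz, hy⟩ := h'.2 z a y hzy
      exact ⟨u' ++ z', y', List.append_assoc .., ih h.1 hz, hy⟩
    refine ⟨ih h.1 h'.1, fun x a y hxy => ?_⟩
    rcases List.append_eq_append_iff.1 hxy with ⟨_ | ⟨b, z⟩, rfl, hz⟩ | ⟨z, rfl, hz⟩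
    · simpa using split_right [] a y hz
    · obtain ⟨rfl, rfl⟩ := List.cons.inj hz
      obtain ⟨x', y', rfl, hx, hy⟩ := h.2 x a z rfl
      exact ⟨x', y' ++ v', by simp, hx, ih hy h'.1⟩
    · exact split_right z a y hz.symm

/-- The up-set of `w` for `polLE 𝒞 k`. -/
def polUpper (𝒞 : LClass A) (k : ℕ) (w : List A) : Lang A := {v | polLE 𝒞 k w v}

theorem mem_polUpper_self (𝒞 : LClass A) (k : ℕ) (w : List A) : w ∈ polUpper 𝒞 k w :=
  polLE.refl 𝒞 k w

theorem polUpper_subset_polUpper : polUpper 𝒞 k v ⊆ polUpper 𝒞 k u ↔ polLE 𝒞 k u v :=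
  ⟨fun h => h (mem_polUpper_self 𝒞 k v), fun h _ hx => h.trans hx⟩

theorem finite_factorizations (w : List A) :
    {p : List A × A × List A | p.1 ++ p.2.1 :: p.2.2 = w}.Finite := by
  refine Set.Finite.of_injOn (f := fun p => p.1.length) (t := Iic w.length) ?_ ?_ (finite_Iic _)
  · rintro ⟨u, a, v⟩ rfl
    simp
  · rintro ⟨u, a, v⟩ h ⟨u', a', v'⟩ h' hlen
    obtain ⟨rfl, htail⟩ := List.append_inj (h.trans h'.symm) hlen
    obtain ⟨rfl, rfl⟩ := List.cons.inj htail
    rfl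

theorem polUpper_succ (𝒞 : LClass A) (k : ℕ) (w : List A) :
    polUpper 𝒞 (k + 1) w = polUpper 𝒞 k w ∩ ⋂₀ ((fun p => mcat p.1 p.2.1 p.2.2) ''
      ((fun p => (polUpper 𝒞 k p.1, p.2.1, polUpper 𝒞 k p.2.2)) ''
        {p : List A × A × List A | p.1 ++ p.2.1 :: p.2.2 = w})) := by
  ext x
  refine and_congr_right fun _ => ⟨?_, fun h u a v huv => ?_⟩
  · rintro h _ ⟨_, ⟨⟨u, a, v⟩, huv, rfl⟩, rfl⟩
    obtain ⟨u', v', rfl, hu, hv⟩ := h u a v huv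
    exact ⟨u', hu, v', hv, rfl⟩
  · obtain ⟨u', hu, v', hv, rfl⟩ := h _ ⟨_, ⟨(u, a, v), huv, rfl⟩, rfl⟩
    exact ⟨u', v', rfl, hu, hv⟩

theorem polUpper_mem_PolC [Finite A] (hfin : 𝒞.Finite) (hba : LangBoolAlg 𝒞)
    (hqc : QuotientClosed 𝒞) (k : ℕ) (w : List A) : polUpper 𝒞 k w ∈ PolC 𝒞 := by
  induction k generalizing w with
  | zero => exact PolC.of_mem (cclass_mem hfin hba subset_rfl w)
  | succ k ih =>
    have hinter : ∀ K L, K ∈ PolC 𝒞 → L ∈ PolC 𝒞 → K ∩ L ∈ PolC 𝒞 :=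
      fun _ _ => PolC.inter hfin hba hqc
    rw [polUpper_succ]
    refine hinter _ _ (ih w) (sInter_mem_of_finite (PolC.of_mem hba.1.2.1) hinter
      (((finite_factorizations w).image _).image _) ?_)
    rintro _ ⟨_, ⟨⟨u, a, v⟩, -, rfl⟩, rfl⟩
    exact PolC.mcat a (ih u) (ih v)

theorem finite_range_polUpper [Finite A] (hfin : 𝒞.Finite) (k : ℕ) :
    (range (polUpper 𝒞 k)).Finite := by
  induction k with
  | zero => exact finite_range_cclass hfin
  | succ k ih =>
    refine (Set.Finite.image2 (fun X Y => X ∩ ⋂₀ ((fun p => mcat p.1 p.2.1 p.2.2) '' Y)) ih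
      (ih.prod ((finite_univ (α := A)).prod ih)).finite_subsets).subset ?_
    rintro _ ⟨w, rfl⟩
    rw [polUpper_succ]
    refine ⟨_, ⟨w, rfl⟩, _, ?_, rfl⟩
    rintro _ ⟨⟨u, a, v⟩, -, rfl⟩
    exact ⟨⟨u, rfl⟩, trivial, ⟨v, rfl⟩⟩

/-- The equivalence class of `w` for the preorder `polLE 𝒞 k`. -/
def polClass (𝒞 : LClass A) (k : ℕ) (w : List A) : Lang A := cclass (range (polUpper 𝒞 k)) w

theorem mem_polClass : v ∈ polClass 𝒞 k w ↔ polLE 𝒞 k w v ∧ polLE 𝒞 k v w := by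
  refine ⟨fun h => ?_, fun h => ?_⟩
  · exact ⟨(h _ ⟨w, rfl⟩).1 (mem_polUpper_self 𝒞 k w), (h _ ⟨v, rfl⟩).2 (mem_polUpper_self 𝒞 k v)⟩
  · rintro _ ⟨x, rfl⟩
    exact ⟨fun hw => polLE.trans hw h.1, fun hv => polLE.trans hv h.2⟩

theorem mem_polClass_self (𝒞 : LClass A) (k : ℕ) (w : List A) : w ∈ polClass 𝒞 k w :=
  ceq.refl _ w

theorem polClass_subset (hkm : k ≤ m) (w : List A) : polClass 𝒞 m w ⊆ polClass 𝒞 k w := fun _ hv =>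
  mem_polClass.2 ⟨(mem_polClass.1 hv).1.of_le hkm, (mem_polClass.1 hv).2.of_le hkm⟩

theorem finite_range_polClass [Finite A] (hfin : 𝒞.Finite) (k : ℕ) :
    (range (polClass 𝒞 k)).Finite :=
  finite_range_cclass (finite_range_polUpper hfin k)

theorem BoolC.langBoolAlg (𝒞 : LClass A) : LangBoolAlg (BoolC 𝒞) :=
  ⟨⟨fun _ h𝒟 => h𝒟.1.1.1, fun _ h𝒟 => h𝒟.1.1.2.1,
    fun _ _ hK hL 𝒟 h𝒟 => h𝒟.1.1.2.2.1 _ _ (hK 𝒟 h𝒟) (hL 𝒟 h𝒟),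
    fun _ _ hK hL 𝒟 h𝒟 => h𝒟.1.1.2.2.2 _ _ (hK 𝒟 h𝒟) (hL 𝒟 h𝒟)⟩,
    fun _ hK 𝒟 h𝒟 => h𝒟.1.2 _ (hK 𝒟 h𝒟)⟩

theorem polClass_mem_BoolC [Finite A] (hfin : 𝒞.Finite) (hba : LangBoolAlg 𝒞)
    (hqc : QuotientClosed 𝒞) (k : ℕ) (w : List A) : polClass 𝒞 k w ∈ BoolC (PolC 𝒞) := by
  refine cclass_mem (finite_range_polUpper hfin k) (BoolC.langBoolAlg _) ?_ w
  rintro _ ⟨v, rfl⟩ 𝒟 h𝒟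
  exact h𝒟.2 (polUpper_mem_PolC hfin hba hqc k v)

open Filter

theorem eventually_mem_of_polLE (hK : K ∈ PolC 𝒞) :
    ∀ᶠ k in atTop, ∀ w v, polLE 𝒞 k w v → w ∈ K → v ∈ K := by
  refine hK {K | ∀ᶠ k in atTop, ∀ w v, polLE 𝒞 k w v → w ∈ K → v ∈ K} ⟨?_, ?_, ?_⟩
  · exact fun K hK => Eventually.of_forall fun k w v hwv => (hwv.ceq K hK).1
  · intro K L hK hL
    filter_upwards [hK, hL] with k hK hL w v hwv
    exact Or.imp (hK w v hwv) (hL w v hwv)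
  · intro K L a hK hL
    rw [Set.mem_ofPred_eq, ← map_add_atTop_eq_nat 1, eventually_map]
    filter_upwards [hK, hL] with k hK hL
    rintro _ x hx ⟨u, hu, v, hv, rfl⟩
    obtain ⟨u', v', rfl, hu', hv'⟩ := hx.2 u a v rfl
    exact ⟨u', hK u u' hu' hu, v', hL v v' hv' hv, rfl⟩

theorem eventually_polClass_subset (hK : K ∈ BoolC (PolC 𝒞)) :
    ∀ᶠ k in atTop, ∀ w ∈ K, polClass 𝒞 k w ⊆ K := by
  refine hK {K | ∀ᶠ k in atTop, ∀ w ∈ K, polClass 𝒞 k w ⊆ K}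
    ⟨⟨⟨?_, ?_, ?_, ?_⟩, ?_⟩, fun K hK => ?_⟩
  · exact Eventually.of_forall fun k w hw => hw.elim
  · exact Eventually.of_forall fun k w _ => subset_univ _
  · intro K L hK hL
    filter_upwards [hK, hL] with k hK hL w hw
    exact hw.elim (fun hw => (hK w hw).trans subset_union_left)
      fun hw => (hL w hw).trans subset_union_right
  · intro K L hK hL
    filter_upwards [hK, hL] with k hK hL w hw
    exact subset_inter (hK w hw.1) (hL w hw.2)
  · intro K hK
    filter_upwards [hK] with k hK w hw v hv hvK
    exact hw (hK v hvK (ceq.symm hv))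
  · filter_upwards [eventually_mem_of_polLE hK] with k hK w hw v hv
    exact hK w v (mem_polClass.1 hv).1 hw

/- Among the factorizations of `x` above `(u, v)`, one that is maximal for `polLE 𝒞 k` works. -/
theorem polLE.exists_factorization_polClass_subset {a : A} (h : polLE 𝒞 (k + 1) (u ++ a :: v) x) :
    ∃ u' v', polLE 𝒞 k u u' ∧ polLE 𝒞 k v v' ∧
      polClass 𝒞 (k + 1) x ⊆ mcat (polClass 𝒞 k u') a (polClass 𝒞 k v') := by
  let s := {p : List A × List A | p.1 ++ a :: p.2 = x ∧ polLE 𝒞 k u p.1 ∧ polLE 𝒞 k v p.2}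
  have hs : s.Finite := ((finite_factorizations x).image fun p => (p.1, p.2.2)).subset
    fun p hp => ⟨(p.1, a, p.2), hp.1, rfl⟩
  have hne : s.Nonempty := let ⟨u', v', h'⟩ := h.2 u a v rfl; ⟨(u', v'), h'⟩
  obtain ⟨⟨u', v'⟩, ⟨huv, hu, hv⟩, hmin⟩ :=
    hs.exists_minimalFor (fun p => (polUpper 𝒞 k p.1, polUpper 𝒞 k p.2)) s hne
  refine ⟨u', v', hu, hv, fun y hy => ?_⟩
  obtain ⟨hxy, hyx⟩ := mem_polClass.1 hy
  obtain ⟨y₁, y₂, hy_eq, hy₁, hy₂⟩ := hxy.2 u' a v' huv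
  obtain ⟨x₁, x₂, hx_eq, hx₁, hx₂⟩ := hyx.2 y₁ a y₂ hy_eq
  have hx_le := hmin (j := (x₁, x₂)) ⟨hx_eq, hu.trans (hy₁.trans hx₁), hv.trans (hy₂.trans hx₂)⟩
    ⟨polUpper_subset_polUpper.2 (hy₁.trans hx₁), polUpper_subset_polUpper.2 (hy₂.trans hx₂)⟩
  exact ⟨y₁, mem_polClass.2 ⟨hy₁, hx₁.trans (polUpper_subset_polUpper.1 hx_le.1)⟩,
    y₂, mem_polClass.2 ⟨hy₂, hx₂.trans (polUpper_subset_polUpper.1 hx_le.2)⟩, hy_eq⟩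

end Stratification

/-! ### Rating maps -/

section RatingMaps

variable [Semiring R] {ρ : Lang A → R} {K L : Lang A} {q r s t : R}

theorem rle_trans (h : rle r s) (h' : rle s t) : rle r t :=
  calc r + t = r + s + t := by rw [add_assoc, h']
    _ = t := by rw [h, h']

theorem rle_mul (h : rle q r) (h' : rle s t) : rle (q * s) (r * t) :=
  rle_trans (s := r * s) ((add_mul q r s).symm.trans (congrArg (· * s) h))
    ((mul_add r s t).symm.trans (congrArg (r * ·) h'))

theorem IsRatingMap.mono (hρ : IsRatingMap ρ) (h : K ⊆ L) : rle (ρ K) (ρ L) :=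
  (hρ.2 K L).symm.trans (congrArg ρ (union_eq_self_of_subset_left h))

theorem cat_singleton (u v : List A) : cat {u} {v} = ({u ++ v} : Lang A) := by
  ext w
  constructor
  · rintro ⟨_, rfl, _, rfl, rfl⟩
    rfl
  · rintro rfl
    exact ⟨u, rfl, v, rfl, rfl⟩

theorem IsMultiplicative.append (hmult : IsMultiplicative ρ) (u v : List A) :
    ρ {u ++ v} = ρ {u} * ρ {v} := by
  rw [← hmult.2, cat_singleton]

theorem IsRatingMap.exists_eq_sum (hρ : IsRatingMap ρ) (l : List R)
    (hl : ∀ r ∈ l, ∃ w ∈ K, ρ {w} = r) : ∃ L ⊆ K, ρ L = l.sum := by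
  induction l with
  | nil => exact ⟨∅, empty_subset K, hρ.1⟩
  | cons r l ih =>
    obtain ⟨L, hLK, hL⟩ := ih fun r hr => hl r (List.mem_cons_of_mem _ hr)
    obtain ⟨w, hw, rfl⟩ := hl r List.mem_cons_self
    exact ⟨{w} ∪ L, union_subset (singleton_subset_iff.2 hw) hLK, by
      rw [hρ.2, hL, List.sum_cons]⟩

theorem Rbpol.exists_word {𝒞 : LClass A} {S : Set (Lang A × R)} {D : Lang A} {U : Set R}
    (hqc : QuotientClosed 𝒞) (hmult : IsMultiplicative ρ) (h : Rbpol 𝒞 ρ S D q U) :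
    ∃ w, D = cclass 𝒞 w ∧ ρ {w} = q := by
  induction h with
  | triv w => exact ⟨w, rfl, rfl⟩
  | down _ _ ih => exact ih
  | mul _ _ ih ih' =>
    obtain ⟨u, rfl, rfl⟩ := ih
    obtain ⟨v, rfl, rfl⟩ := ih'
    exact ⟨u ++ v, cmul_cclass hqc u v, hmult.append u v⟩
  | clos _ _ _ _ ih => exact ih

end RatingMaps

/-! ### Saturated sets are contained in the optimal imprint -/

section WordPowers

variable {𝒞 : LClass A} {e : List A} {k : ℕ}

/-- The power `eⁿ` of a word. -/
def wordPow (e : List A) (n : ℕ) : List A := (List.replicate n e).flatten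

theorem wordPow_succ (e : List A) (n : ℕ) : wordPow e (n + 1) = e ++ wordPow e n := rfl

theorem wordPow_one (e : List A) : wordPow e 1 = e := List.append_nil e

theorem wordPow_add (e : List A) (m n : ℕ) : wordPow e (m + n) = wordPow e m ++ wordPow e n := by
  rw [wordPow, List.replicate_add, List.flatten_append]; rfl

theorem exists_factorization_of_append_cons_eq_wordPow {a : A} {n : ℕ} {u v : List A}
    (h : u ++ a :: v = wordPow e n) : ∃ i j x y, n = i + 1 + j ∧ e = x ++ a :: y ∧
      u = wordPow e i ++ x ∧ v = y ++ wordPow e j := by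
  induction n generalizing u v with
  | zero => simp [wordPow] at h
  | succ n ih =>
    have skip : ∀ z, u = e ++ z → z ++ a :: v = wordPow e n → ∃ i j x y,
        n + 1 = i + 1 + j ∧ e = x ++ a :: y ∧ u = wordPow e i ++ x ∧ v = y ++ wordPow e j := by
      rintro z rfl hz
      obtain ⟨i, j, x, y, hn, he, rfl, hv⟩ := ih hz
      exact ⟨i + 1, j, x, y, by omega, he, (List.append_assoc ..).symm, hv⟩
    rcases List.append_eq_append_iff.1 h with ⟨_ | ⟨b, z⟩, hu, hz⟩ | ⟨z, hu, hz⟩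
    · exact skip [] (by simpa using hu.symm) hz
    · obtain ⟨rfl, rfl⟩ := List.cons.inj hz
      exact ⟨0, n, u, z, by omega, hu, rfl, rfl⟩
    · exact skip z hu hz.symm

theorem ceq_wordPow_succ (hqc : QuotientClosed 𝒞) (he : ceq 𝒞 (e ++ e) e) (n : ℕ) :
    ceq 𝒞 (wordPow e (n + 1)) e := by
  induction n with
  | zero => rw [wordPow_one]; exact ceq.refl 𝒞 e
  | succ n ih => exact (ceq.append hqc (ceq.refl 𝒞 e) ih).trans he

/-- Inserting a word `g ∼_𝒞 e` into powers of `e` with exponents at least `t` only moves up for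
`polLE 𝒞 k`. -/
def AbsorbsPowers (𝒞 : LClass A) (k : ℕ) (e : List A) (t : ℕ) : Prop :=
  ∀ g ∈ cclass 𝒞 e, ∀ i a b, t ≤ i → t ≤ a → t ≤ b →
    polLE 𝒞 k (wordPow e i) (wordPow e a ++ (g ++ wordPow e b))

theorem absorbsPowers_zero (hqc : QuotientClosed 𝒞) (he : ceq 𝒞 (e ++ e) e) :
    AbsorbsPowers 𝒞 0 e 1 := by
  intro g hg i a b hi ha hb
  obtain ⟨i, rfl⟩ := Nat.exists_eq_add_of_le' hi
  obtain ⟨a, rfl⟩ := Nat.exists_eq_add_of_le' ha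
  obtain ⟨b, rfl⟩ := Nat.exists_eq_add_of_le' hb
  have hpow := ceq_wordPow_succ hqc he
  have hgb : ceq 𝒞 (g ++ wordPow e (b + 1)) e :=
    (ceq.append hqc (ceq.symm hg) (hpow b)).trans he
  exact (hpow i).trans ((ceq.append hqc (hpow a) hgb).trans he).symm

theorem AbsorbsPowers.polLE_wordPow {t i j : ℕ} (h : AbsorbsPowers 𝒞 k e t) (hi : t ≤ i)
    (hj : 2 * t + 1 ≤ j) : polLE 𝒞 k (wordPow e i) (wordPow e j) := by
  have hpow : wordPow e j = wordPow e t ++ (e ++ wordPow e (j - t - 1)) := by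
    rw [← wordPow_succ, ← wordPow_add]
    congr 1
    omega
  rw [hpow]
  exact h e (ceq.refl 𝒞 e) i t (j - t - 1) hi le_rfl (by omega)

/- A marked letter in `eⁱ` splits it as `(eᵖ x, y eᑫ)`. If `p` is small, then the letter is
matched at the same position in the left power of `e`, otherwise in the right one. -/
theorem AbsorbsPowers.succ (hqc : QuotientClosed 𝒞) {t : ℕ} (h : AbsorbsPowers 𝒞 k e t) :
    AbsorbsPowers 𝒞 (k + 1) e (3 * t + 3) := by
  intro g hg i a b hi ha hb
  refine ⟨h g hg i a b (by omega) (by omega) (by omega), fun u c v huv => ?_⟩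
  obtain ⟨p, q, x, y, rfl, he, rfl, rfl⟩ := exists_factorization_of_append_cons_eq_wordPow huv
  have hpow : ∀ m n l, m + 1 + n = l →
      wordPow e l = wordPow e m ++ x ++ c :: (y ++ wordPow e n) := by
    rintro m n _ rfl
    calc wordPow e (m + 1 + n) = wordPow e m ++ (e ++ wordPow e n) := by
          rw [Nat.add_assoc, wordPow_add, Nat.add_comm 1 n, wordPow_succ]
      _ = wordPow e m ++ ((x ++ c :: y) ++ wordPow e n) := by rw [← he]
      _ = _ := by simp
  rcases lt_or_ge p t with hp | hp
  · refine ⟨wordPow e p ++ x, y ++ (wordPow e (a - 1 - p) ++ (g ++ wordPow e b)), ?_,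
      polLE.refl .., polLE.append hqc (polLE.refl ..)
        (h g hg _ _ _ (by omega) (by omega) (by omega))⟩
    rw [hpow p (a - 1 - p) a (by omega)]
    simp
  · obtain ⟨n, hn, hqn⟩ : ∃ n ≤ 2 * t + 1, polLE 𝒞 k (wordPow e q) (wordPow e n) := by
      rcases le_total q (2 * t + 1) with hq | hq
      · exact ⟨q, hq, polLE.refl ..⟩
      · exact ⟨2 * t + 1, le_rfl, h.polLE_wordPow (by omega) le_rfl⟩
    refine ⟨wordPow e a ++ (g ++ wordPow e (b - 1 - n)) ++ x, y ++ wordPow e n, ?_,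
      polLE.append hqc (h g hg _ _ _ hp (by omega) (by omega)) (polLE.refl ..),
      polLE.append hqc (polLE.refl ..) hqn⟩
    rw [hpow (b - 1 - n) n b (by omega)]
    simp

theorem exists_absorbsPowers (hqc : QuotientClosed 𝒞) (he : ceq 𝒞 (e ++ e) e) (k : ℕ) :
    ∃ t, AbsorbsPowers 𝒞 k e (t + 1) := by
  induction k with
  | zero => exact ⟨0, absorbsPowers_zero hqc he⟩
  | succ k ih => exact let ⟨_, ht⟩ := ih; ⟨_, ht.succ hqc⟩

end WordPowers

section Soundness

variable [Semiring R] {𝒞 : LClass A} {ρ : Lang A → R} {k m : ℕ} {u v w : List A} {r s : R}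

/-- `HasTree 𝒞 ρ k m w r` says that `w` is the root of a tree of words of height `m` whose edges go
up for `polLE 𝒞 k`, and in which the rating of the set of children of each inner node dominates
`r`. -/
def HasTree (𝒞 : LClass A) (ρ : Lang A → R) (k : ℕ) : ℕ → List A → R → Prop
  | 0, _, _ => True
  | m + 1, w, r => ∃ K : Lang A, rle r (ρ K) ∧ ∀ v ∈ K, polLE 𝒞 k w v ∧ HasTree 𝒞 ρ k m v r

theorem HasTree.of_rle (h : HasTree 𝒞 ρ k m w r) (hsr : rle s r) : HasTree 𝒞 ρ k m w s := by
  induction m generalizing w with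
  | zero => trivial
  | succ m ih =>
    obtain ⟨K, hrK, hK⟩ := h
    exact ⟨K, rle_trans hsr hrK, fun v hv => ⟨(hK v hv).1, ih (hK v hv).2⟩⟩

theorem hasTree_singleton (hρ : IsRatingMap ρ) (k m : ℕ) (w : List A) :
    HasTree 𝒞 ρ k m w (ρ {w}) := by
  induction m with
  | zero => trivial
  | succ m ih =>
    refine ⟨{w}, hρ.mono subset_rfl, ?_⟩
    rintro _ rfl
    exact ⟨polLE.refl .., ih⟩

theorem HasTree.mul (hqc : QuotientClosed 𝒞) (hmult : IsMultiplicative ρ)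
    (hu : HasTree 𝒞 ρ k m u r) (hv : HasTree 𝒞 ρ k m v s) :
    HasTree 𝒞 ρ k m (u ++ v) (r * s) := by
  induction m generalizing u v with
  | zero => trivial
  | succ m ih =>
    obtain ⟨K, hrK, hK⟩ := hu
    obtain ⟨L, hsL, hL⟩ := hv
    refine ⟨cat K L, hmult.2 K L ▸ rle_mul hrK hsL, ?_⟩
    rintro _ ⟨x, hx, y, hy, rfl⟩
    exact ⟨polLE.append hqc (hK x hx).1 (hL y hy).1, ih (hK x hx).2 (hL y hy).2⟩

theorem HasTree.pow (hqc : QuotientClosed 𝒞) (hmult : IsMultiplicative ρ) {F : Set R}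
    (hF : smul F F = F) (h : ∀ r ∈ F, HasTree 𝒞 ρ k m w r) (n : ℕ) :
    ∀ r ∈ F, HasTree 𝒞 ρ k m (wordPow w (n + 1)) r := by
  induction n with
  | zero => rwa [wordPow_one]
  | succ n ih =>
    rw [← hF]
    rintro _ ⟨r, hr, s, hs, rfl⟩
    exact (h r hr).mul hqc hmult (ih s hs)

/-- Every element of `S` is dominated by the rating of a language inside its class all of whose
words are roots of trees of height `m`. -/
def HasForests (𝒞 : LClass A) (ρ : Lang A → R) (S : Set (Lang A × R)) (k m : ℕ) : Prop :=
  ∀ p ∈ S, ∃ K ⊆ p.1, rle p.2 (ρ K) ∧ ∀ w ∈ K, HasTree 𝒞 ρ k m w p.2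

variable {S : Set (Lang A × R)}

theorem HasForests.hasTree_clos (hqc : QuotientClosed 𝒞) (hmult : IsMultiplicative ρ)
    (hS : HasForests 𝒞 ρ S k m) {e : List A} {F : Set R} (hF : smul F F = F) {t : ℕ}
    (ht : AbsorbsPowers 𝒞 k e (t + 1)) (h : ∀ r ∈ F, HasTree 𝒞 ρ k (m + 1) e r) :
    ∀ r ∈ smul F (smul {r | (cclass 𝒞 e, r) ∈ S} F),
      HasTree 𝒞 ρ k (m + 1) (wordPow e (t + 1)) r := by
  rintro _ ⟨x, hx, _, ⟨s, hs, y, hy, rfl⟩, rfl⟩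
  obtain ⟨G, hGE, hsG, hG⟩ := hS _ hs
  obtain ⟨K, hxK, hK⟩ := HasTree.pow hqc hmult hF h t x hx
  obtain ⟨L, hyL, hL⟩ := HasTree.pow hqc hmult hF h t y hy
  refine ⟨cat K (cat G L), ?_, ?_⟩
  · rw [hmult.2, hmult.2]
    exact rle_mul hxK (rle_mul hsG hyL)
  · rintro _ ⟨a, ha, _, ⟨g, hg, b, hb, rfl⟩, rfl⟩
    refine ⟨?_, (hK a ha).2.mul hqc hmult ((hG g hg).mul hqc hmult (hL b hb).2)⟩
    exact (ht g (hGE hg) _ _ _ le_rfl le_rfl le_rfl).trans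
      (polLE.append hqc (hK a ha).1 (polLE.append hqc (polLE.refl 𝒞 k g) (hL b hb).1))

theorem apply_wordPow_succ (hmult : IsMultiplicative ρ) {e : List A} (he : ρ {e} * ρ {e} = ρ {e})
    (n : ℕ) : ρ {wordPow e (n + 1)} = ρ {e} := by
  induction n with
  | zero => rw [wordPow_one]
  | succ n ih => rw [wordPow_succ, hmult.append, ih, he]

theorem HasForests.exists_word_hasTree (hqc : QuotientClosed 𝒞) (hρ : IsRatingMap ρ)
    (hmult : IsMultiplicative ρ) (hS : HasForests 𝒞 ρ S k m) {D : Lang A} {U : Set R}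
    (h : Rbpol 𝒞 ρ S D r U) :
    ∃ w, D = cclass 𝒞 w ∧ ρ {w} = r ∧ ∀ u ∈ U, HasTree 𝒞 ρ k (m + 1) w u := by
  induction h with
  | triv w => exact ⟨w, rfl, rfl, by rintro _ rfl; exact hasTree_singleton hρ k _ w⟩
  | down _ hV ih =>
    obtain ⟨w, hD, hw, htree⟩ := ih
    exact ⟨w, hD, hw, fun r hr => let ⟨s, hs, hrs⟩ := hV hr; (htree s hs).of_rle hrs⟩
  | mul _ _ ih ih' =>
    obtain ⟨u, rfl, rfl, hu⟩ := ih
    obtain ⟨v, rfl, rfl, hv⟩ := ih'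
    refine ⟨u ++ v, cmul_cclass hqc u v, hmult.append u v, ?_⟩
    rintro _ ⟨x, hx, y, hy, rfl⟩
    exact (hu x hx).mul hqc hmult (hv y hy)
  | clos _ hE hf hF ih =>
    obtain ⟨e, rfl, rfl, he⟩ := ih
    rw [cmul_cclass hqc, cclass_eq_iff] at hE
    obtain ⟨t, ht⟩ := exists_absorbsPowers hqc hE k
    exact ⟨wordPow e (t + 1), cclass_eq_iff.2 (ceq_wordPow_succ hqc hE t).symm,
      apply_wordPow_succ hmult hf t, hS.hasTree_clos hqc hmult hF ht he⟩

theorem BPolSaturated.hasForests (hqc : QuotientClosed 𝒞) (hρ : IsRatingMap ρ)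
    (hmult : IsMultiplicative ρ) (hS : BPolSaturated 𝒞 ρ S) (k m : ℕ) :
    HasForests 𝒞 ρ S k m := by
  induction m with
  | zero =>
    intro p hp
    obtain ⟨l, -, hpl, hl⟩ := hS.2 p hp
    obtain ⟨K, hK, hsum⟩ := hρ.exists_eq_sum (K := p.1) l fun r hr =>
      let ⟨w, hD, hw⟩ := (hl r hr).exists_word hqc hmult
      ⟨w, hD ▸ ceq.refl 𝒞 w, hw⟩
    exact ⟨K, hK, hsum ▸ hpl, fun _ _ => trivial⟩
  | succ m ih =>
    intro p hp
    obtain ⟨l, -, hpl, hl⟩ := hS.2 p hp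
    obtain ⟨K, hK, hsum⟩ := hρ.exists_eq_sum (K := {w ∈ p.1 | HasTree 𝒞 ρ k (m + 1) w p.2}) l
      fun r hr =>
        let ⟨w, hD, hw, htree⟩ := ih.exists_word_hasTree hqc hρ hmult (hl r hr)
        ⟨w, ⟨hD ▸ ceq.refl 𝒞 w, (htree _ rfl).of_rle hpl⟩, hw⟩
    exact ⟨K, fun w hw => (hK hw).1, hsum ▸ hpl, fun w hw => (hK hw).2⟩

/-- The number of `polLE 𝒞 k`-classes strictly above `w`. -/
noncomputable def polRank (𝒞 : LClass A) (k : ℕ) (w : List A) : ℕ :=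
  {X ∈ range (polUpper 𝒞 k) | X ⊂ polUpper 𝒞 k w}.ncard

theorem polRank_lt_polRank [Finite A] (hfin : 𝒞.Finite) (h : polLE 𝒞 k u v)
    (h' : ¬ polLE 𝒞 k v u) : polRank 𝒞 k v < polRank 𝒞 k u := by
  have hlt : polUpper 𝒞 k v ⊂ polUpper 𝒞 k u :=
    ⟨polUpper_subset_polUpper.2 h, fun hsub => h' (polUpper_subset_polUpper.1 hsub)⟩
  refine ncard_lt_ncard ⟨fun X hX => ⟨hX.1, hX.2.trans hlt⟩, fun hsub => ?_⟩
    ((finite_range_polUpper hfin k).subset fun _ hX => hX.1)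
  exact (hsub ⟨⟨v, rfl⟩, hlt⟩).2.ne rfl

/- Going up the tree, the rank decreases until some node is equivalent to all of its children. -/
theorem HasTree.exists_rle_polClass [Finite A] (hfin : 𝒞.Finite) (hρ : IsRatingMap ρ)
    (h : HasTree 𝒞 ρ k m w r) (hm : polRank 𝒞 k w < m) :
    ∃ v, polLE 𝒞 k w v ∧ rle r (ρ (polClass 𝒞 k v)) := by
  induction m generalizing w with
  | zero => exact absurd hm (Nat.not_lt_zero _)
  | succ m ih =>
    obtain ⟨K, hrK, hK⟩ := h
    by_cases hKw : ∀ v ∈ K, polLE 𝒞 k v w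
    · exact ⟨w, polLE.refl .., rle_trans hrK
        (hρ.mono fun v hv => mem_polClass.2 ⟨(hK v hv).1, hKw v hv⟩)⟩
    · push Not at hKw
      obtain ⟨v, hv, hvw⟩ := hKw
      have hrank := polRank_lt_polRank hfin (hK v hv).1 hvw
      obtain ⟨x, hvx, hx⟩ := ih (hK v hv).2 (by omega)
      exact ⟨x, (hK v hv).1.trans hvx, hx⟩

theorem BPolSaturated.mem_optImprint [Finite A] (hfin : 𝒞.Finite) (hqc : QuotientClosed 𝒞)
    (hρ : IsRatingMap ρ) (hmult : IsMultiplicative ρ) (hS : BPolSaturated 𝒞 ρ S)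
    {p : Lang A × R} (hp : p ∈ S) : p.2 ∈ optImprint (BoolC (PolC 𝒞)) ρ p.1 := by
  rintro Ks ⟨⟨hKs, hcover⟩, hsub⟩
  obtain ⟨k, hk⟩ := ((Filter.eventually_all_finite hKs).2
    fun K hK => eventually_polClass_subset (hsub hK)).exists
  obtain ⟨l, hl, hpl, hRbpol⟩ := hS.2 p hp
  obtain ⟨r, hr⟩ := List.exists_mem_of_ne_nil l hl
  obtain ⟨w, hD, -, htree⟩ := (hS.hasForests hqc hρ hmult k
    (range (polUpper 𝒞 k)).ncard).exists_word_hasTree hqc hρ hmult (hRbpol r hr)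
  obtain ⟨v, hwv, hv⟩ := (htree _ rfl).exists_rle_polClass hfin hρ
    (Nat.lt_succ_of_le (ncard_le_ncard (fun _ hX => hX.1) (finite_range_polUpper hfin k)))
  obtain ⟨K, hK, hvK⟩ := hcover (hD ▸ hwv.ceq : v ∈ p.1)
  exact ⟨K, hK, rle_trans hpl (rle_trans hv (hρ.mono (hk K hK v hvK)))⟩

end Soundness

/-! ### The optimal imprint is saturated -/

section RatingBounds

open scoped Pointwise

variable [Semiring R] {𝒞 : LClass A} {ρ : Lang A → R} {S : Set (Lang A × R)} {k k₀ m : ℕ}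
  {u v w : List A} {r s : R} {U V : Set R}

theorem smul_eq_mul_set (U V : Set R) : smul U V = U * V := rfl

theorem mem_dclos_of_rle (hrs : rle r s) (hs : s ∈ dclos U) : r ∈ dclos U :=
  let ⟨t, ht, hst⟩ := hs
  ⟨t, ht, rle_trans hrs hst⟩

theorem mul_mem_dclos (hr : r ∈ dclos U) (hs : s ∈ dclos V) : r * s ∈ dclos (U * V) :=
  let ⟨_, hr', hrr'⟩ := hr
  let ⟨_, hs', hss'⟩ := hs
  ⟨_, mul_mem_mul hr' hs', rle_mul hrr' hss'⟩

theorem mcat_eq_cat (K : Lang A) (a : A) (L : Lang A) : mcat K a L = cat K (cat {[a]} L) := by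
  ext w
  constructor
  · rintro ⟨u, hu, v, hv, rfl⟩
    exact ⟨u, hu, a :: v, ⟨[a], rfl, v, hv, rfl⟩, rfl⟩
  · rintro ⟨u, hu, _, ⟨_, rfl, v, hv, rfl⟩, rfl⟩
    exact ⟨u, hu, v, hv, rfl⟩

theorem cat_singleton_polClass_subset (hqc : QuotientClosed 𝒞) (k : ℕ) (u v : List A) :
    cat {u} (polClass 𝒞 k v) ⊆ polClass 𝒞 k (u ++ v) := by
  rintro _ ⟨_, rfl, x, hx, rfl⟩
  obtain ⟨hvx, hxv⟩ := mem_polClass.1 hx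
  exact mem_polClass.2
    ⟨polLE.append hqc (polLE.refl ..) hvx, polLE.append hqc (polLE.refl ..) hxv⟩

/-- Every `polLE 𝒞 k`-equivalence class above `w` has its rating dominated by an element of `U`. -/
def BoundsRating (𝒞 : LClass A) (ρ : Lang A → R) (k : ℕ) (w : List A) (U : Set R) : Prop :=
  ∀ v, polLE 𝒞 k w v → ρ (polClass 𝒞 k v) ∈ dclos U

theorem BoundsRating.mono (hρ : IsRatingMap ρ) (h : BoundsRating 𝒞 ρ k w U) (hkm : k ≤ m) :
    BoundsRating 𝒞 ρ m w U := fun v hv =>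
  mem_dclos_of_rle (hρ.mono (polClass_subset hkm v)) (h v (hv.of_le hkm))

theorem boundsRating_append_cons (hρ : IsRatingMap ρ) (hmult : IsMultiplicative ρ) {a : A}
    (hu : BoundsRating 𝒞 ρ k u U)
    (hv : ∀ v', polLE 𝒞 k v v' → ρ (cat {[a]} (polClass 𝒞 k v')) ∈ dclos V) :
    BoundsRating 𝒞 ρ (k + 1) (u ++ a :: v) (U * V) := by
  intro x hx
  obtain ⟨u', v', hu', hv', hsub⟩ := hx.exists_factorization_polClass_subset
  refine mem_dclos_of_rle (hρ.mono hsub) ?_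
  rw [mcat_eq_cat, hmult.2]
  exact mul_mem_dclos (hu u' hu') (hv v' hv')

theorem BoundsRating.mul (hqc : QuotientClosed 𝒞) (hρ : IsRatingMap ρ)
    (hmult : IsMultiplicative ρ) (hu : BoundsRating 𝒞 ρ k u U) (hv : BoundsRating 𝒞 ρ k v V) :
    BoundsRating 𝒞 ρ (k + 1) (u ++ v) (U * V) := by
  cases v with
  | nil =>
    intro x hx
    rw [List.append_nil] at hx
    have one_mem : 1 ∈ dclos V := hmult.1 ▸ mem_dclos_of_rle
      (hρ.mono (singleton_subset_iff.2 (mem_polClass_self 𝒞 k []))) (hv [] (polLE.refl ..))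
    rw [← mul_one (ρ _)]
    exact mul_mem_dclos (hu.mono hρ (Nat.le_succ k) x hx) one_mem
  | cons a v =>
    refine boundsRating_append_cons hρ hmult hu fun v' hv' => ?_
    exact mem_dclos_of_rle (hρ.mono (cat_singleton_polClass_subset hqc k [a] v'))
      (hv _ (polLE.append hqc (polLE.refl 𝒞 k [a]) hv'))

theorem BoundsRating.mul_letter (hρ : IsRatingMap ρ) (hmult : IsMultiplicative ρ) (a : A)
    (hu : BoundsRating 𝒞 ρ k u U) (hv : BoundsRating 𝒞 ρ k v V) :
    BoundsRating 𝒞 ρ (k + 1) (u ++ a :: v) (U * ({ρ {[a]}} * V)) := by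
  refine boundsRating_append_cons hρ hmult hu fun v' hv' => ?_
  rw [hmult.2]
  exact mul_mem_dclos ⟨_, rfl, hρ.mono subset_rfl⟩ (hv v' hv')

/-- The set `S(E)` of the elements of `S` over the class `E`. -/
def classFiber (S : Set (Lang A × R)) (E : Lang A) : Set R := {r | (E, r) ∈ S}

theorem boundsRating_classFiber (hρ : IsRatingMap ρ)
    (hS : ∀ u, (cclass 𝒞 u, ρ (polClass 𝒞 k u)) ∈ S) (w : List A) :
    BoundsRating 𝒞 ρ k w (classFiber S (cclass 𝒞 w)) := fun v hv =>
  ⟨_, cclass_eq_iff.2 hv.ceq ▸ hS v, hρ.mono subset_rfl⟩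

/-- `U` bounds the ratings above `w` and is generated by the closure rules of `Rbpol`. -/
def IsApprox (𝒞 : LClass A) (ρ : Lang A → R) (S : Set (Lang A × R)) (k : ℕ) (w : List A)
    (U : Set R) : Prop :=
  Rbpol 𝒞 ρ S (cclass 𝒞 w) (ρ {w}) U ∧ BoundsRating 𝒞 ρ k w U

theorem IsApprox.mono (hρ : IsRatingMap ρ) (h : IsApprox 𝒞 ρ S k w U) (hkm : k ≤ m) :
    IsApprox 𝒞 ρ S m w U := ⟨h.1, h.2.mono hρ hkm⟩

theorem Rbpol.append (hqc : QuotientClosed 𝒞) (hmult : IsMultiplicative ρ)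
    (hu : Rbpol 𝒞 ρ S (cclass 𝒞 u) (ρ {u}) U) (hv : Rbpol 𝒞 ρ S (cclass 𝒞 v) (ρ {v}) V) :
    Rbpol 𝒞 ρ S (cclass 𝒞 (u ++ v)) (ρ {u ++ v}) (U * V) := by
  rw [← cmul_cclass hqc, hmult.append]
  exact hu.mul hv

theorem IsApprox.mul (hqc : QuotientClosed 𝒞) (hρ : IsRatingMap ρ) (hmult : IsMultiplicative ρ)
    (hu : IsApprox 𝒞 ρ S k u U) (hv : IsApprox 𝒞 ρ S k v V) :
    IsApprox 𝒞 ρ S (k + 1) (u ++ v) (U * V) :=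
  ⟨hu.1.append hqc hmult hv.1, hu.2.mul hqc hρ hmult hv.2⟩

theorem isApprox_nil (hqc : QuotientClosed 𝒞) (hρ : IsRatingMap ρ) (hmult : IsMultiplicative ρ)
    (hS : ∀ u, (cclass 𝒞 u, ρ (polClass 𝒞 k u)) ∈ S) :
    IsApprox 𝒞 ρ S k [] (classFiber S (cclass 𝒞 [])) := by
  refine ⟨?_, boundsRating_classFiber hρ hS []⟩
  have hone : ({ρ {[]}} : Set R) = 1 := congrArg singleton hmult.1
  have htriv : Rbpol 𝒞 ρ S (cclass 𝒞 []) (ρ {[]}) 1 := hone ▸ Rbpol.triv []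
  have hclos := htriv.clos (cmul_cclass hqc [] []) (by rw [hmult.1, one_mul]) (one_mul 1)
  rwa [smul_eq_mul_set, smul_eq_mul_set, one_mul, mul_one] at hclos

theorem isApprox_letter (hqc : QuotientClosed 𝒞) (hρ : IsRatingMap ρ)
    (hmult : IsMultiplicative ρ) (hS : ∀ u, (cclass 𝒞 u, ρ (polClass 𝒞 k u)) ∈ S) (a : A) :
    ∃ U, IsApprox 𝒞 ρ S (k + 1) [a] U := by
  have hnil := isApprox_nil hqc hρ hmult hS
  exact ⟨_, hnil.1.append hqc hmult ((Rbpol.triv [a]).append hqc hmult hnil.1),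
    hnil.2.mul_letter hρ hmult a hnil.2⟩

variable {N : Type} {α : List A → N}

/-- The value of a word under `α` determines its `∼_𝒞`-class and its rating. -/
def DeterminesRating (𝒞 : LClass A) (ρ : Lang A → R) (α : List A → N) : Prop :=
  ∀ u v, α u = α v → cclass 𝒞 u = cclass 𝒞 v ∧ ρ {u} = ρ {v}

theorem exists_determinesRating [Finite R] (hfin : 𝒞.Finite) (hqc : QuotientClosed 𝒞)
    (hmult : IsMultiplicative ρ) : ∃ (N : Type) (_ : Monoid N) (_ : Finite N) (α : List A → N),
      IsMonoidMorphism α ∧ DeterminesRating 𝒞 ρ α := by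
  let invariants (w : FreeMonoid A) : range (cclass 𝒞) × R :=
    (⟨cclass 𝒞 w.toList, w.toList, rfl⟩, ρ {w.toList})
  have class_append : ∀ u v u' v', cclass 𝒞 u = cclass 𝒞 u' → cclass 𝒞 v = cclass 𝒞 v' →
      cclass 𝒞 (u ++ v) = cclass 𝒞 (u' ++ v') := fun u v u' v' hu hv => by
    rw [← cmul_cclass hqc, hu, hv, cmul_cclass hqc]
  have rating_append : ∀ u v u' v', ρ {u} = ρ {u'} → ρ {v} = ρ {v'} →
      ρ {u ++ v} = ρ {u' ++ v'} := fun u v u' v' hu hv => by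
    rw [hmult.append, hu, hv, hmult.append]
  let con : Con (FreeMonoid A) :=
    { Setoid.ker invariants with
      mul' := fun {u u' v v'} hu hv => Prod.ext
        (Subtype.ext (class_append u.toList v.toList u'.toList v'.toList
          (congrArg (·.1.1) hu) (congrArg (·.1.1) hv)))
        (rating_append u.toList v.toList u'.toList v'.toList
          (congrArg Prod.snd hu) (congrArg Prod.snd hv)) }
  have : Finite (range (cclass 𝒞)) := finite_range_cclass hfin
  have hfinite : Finite con.Quotient := Finite.of_injective _ (Setoid.kerLift_injective invariants)
  refine ⟨con.Quotient, inferInstance, hfinite, fun w => con.mk' (.ofList w), ⟨rfl, fun _ _ => rfl⟩,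
    fun u v h => ?_⟩
  have hker : invariants (.ofList u) = invariants (.ofList v) := con.eq.1 h
  exact ⟨congrArg (·.1.1) hker, congrArg Prod.snd hker⟩

/- The closure rule of `Rbpol` allows the middle word to be approximated by `S` alone, at a level
which does not depend on that word. -/
theorem IsApprox.sandwich (hqc : QuotientClosed 𝒞) (hρ : IsRatingMap ρ)
    (hmult : IsMultiplicative ρ) (hS : ∀ u, (cclass 𝒞 u, ρ (polClass 𝒞 k₀ u)) ∈ S) (hk : k₀ ≤ k)
    [Monoid N] (hα : IsMonoidMorphism α) (hαρ : DeterminesRating 𝒞 ρ α) {e : N}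
    (he : IsIdempotentElem e) {F : Set R} (hF : IsIdempotentElem F) {y x z : List A}
    (hy : IsApprox 𝒞 ρ S k y F) (hz : IsApprox 𝒞 ρ S k z F) (hye : α y = e)
    (hxe : α x = e) (hze : α z = e) :
    IsApprox 𝒞 ρ S (k + 2) (y ++ (x ++ z)) (F * (classFiber S (cclass 𝒞 y) * F)) := by
  obtain ⟨hclass, hrating⟩ := hαρ (y ++ (x ++ z)) y (by rw [hα.2, hα.2, hye, hxe, hze, he, he])
  obtain ⟨hclass_idem, hrating_idem⟩ := hαρ (y ++ y) y (by rw [hα.2, hye, he])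
  constructor
  · rw [hclass, hrating]
    exact hy.1.clos (by rw [cmul_cclass hqc, hclass_idem]) (by rw [← hmult.append, hrating_idem]) hF
  · have hx : BoundsRating 𝒞 ρ k x (classFiber S (cclass 𝒞 y)) :=
      (hαρ x y (hxe.trans hye.symm)).1 ▸ (boundsRating_classFiber hρ hS x).mono hρ hk
    exact (hy.2.mono hρ (Nat.le_succ k)).mul hqc hρ hmult (hx.mul hqc hρ hmult hz.2)

end RatingBounds

section Approximation

open scoped Pointwise

variable [Semiring R] {𝒞 : LClass A} {ρ : Lang A → R} {S : Set (Lang A × R)} {k k₀ : ℕ}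
  {N : Type} {α : List A → N} {e : N}

/-- The words with an approximation at level `k`. -/
def approximableAt (𝒞 : LClass A) (ρ : Lang A → R) (S : Set (Lang A × R)) (k : ℕ) : Language A :=
  {w | ∃ U, IsApprox 𝒞 ρ S k w U}

theorem approximableAt_mono (hρ : IsRatingMap ρ) : Monotone (approximableAt 𝒞 ρ S) :=
  fun _ _ hkm _ ⟨U, hU⟩ => ⟨U, hU.mono hρ hkm⟩

/-- The languages whose words all have an approximation at a common level. -/
def uniformlyApproximable (𝒞 : LClass A) (ρ : Lang A → R) (S : Set (Lang A × R)) :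
    Set (Language A) :=
  {X | ∃ k, X ≤ approximableAt 𝒞 ρ S k}

theorem isMulIdeal_uniformlyApproximable (hqc : QuotientClosed 𝒞) (hρ : IsRatingMap ρ)
    (hmult : IsMultiplicative ρ) (hS : ∀ u, (cclass 𝒞 u, ρ (polClass 𝒞 k₀ u)) ∈ S) :
    IsMulIdeal (uniformlyApproximable 𝒞 ρ S) where
  one_mem := ⟨k₀, by rintro _ rfl; exact ⟨_, isApprox_nil hqc hρ hmult hS⟩⟩
  mem_of_le := fun hle ⟨k, hk⟩ => ⟨k, hle.trans hk⟩
  add_mem := fun ⟨k, hk⟩ ⟨m, hm⟩ =>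
    ⟨max k m, add_le (hk.trans (approximableAt_mono hρ (le_max_left k m)))
      (hm.trans (approximableAt_mono hρ (le_max_right k m)))⟩
  mul_mem := by
    rintro X Y ⟨k, hk⟩ ⟨m, hm⟩
    refine ⟨max k m + 1, ?_⟩
    rintro _ ⟨u, hu, v, hv, rfl⟩
    obtain ⟨U, hU⟩ := approximableAt_mono hρ (le_max_left k m) (hk hu)
    obtain ⟨V, hV⟩ := approximableAt_mono hρ (le_max_right k m) (hm hv)
    exact ⟨_, hU.mul hqc hρ hmult hV⟩

/-- The words of value `e` together with an approximation at level `k`; they are the letters of the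
alphabet over which the words in the star of a language are written. -/
abbrev ApproxBlock (𝒞 : LClass A) (ρ : Lang A → R) (S : Set (Lang A × R)) (α : List A → N)
    (e : N) (k : ℕ) : Type :=
  {p : List A × Set R // IsApprox 𝒞 ρ S k p.1 p.2 ∧ α p.1 = e}

/-- The word spelled by a sequence of blocks. -/
def blockWord (M : List (ApproxBlock 𝒞 ρ S α e k)) : List A := (M.map (·.1.1)).flatten

/-- The product of the approximations of a sequence of blocks. -/
def blockValue (M : List (ApproxBlock 𝒞 ρ S α e k)) : Set R := (M.map (·.1.2)).prod

theorem blockWord_append (M M' : List (ApproxBlock 𝒞 ρ S α e k)) :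
    blockWord (M ++ M') = blockWord M ++ blockWord M' := by
  rw [blockWord, List.map_append, List.flatten_append]; rfl

theorem isMonoidMorphism_blockValue :
    IsMonoidMorphism (blockValue : List (ApproxBlock 𝒞 ρ S α e k) → Set R) :=
  ⟨rfl, fun M M' => by rw [blockValue, List.map_append, List.prod_append]; rfl⟩

theorem isApprox_blockWord (hqc : QuotientClosed 𝒞) (hρ : IsRatingMap ρ)
    (hmult : IsMultiplicative ρ) (M : List (ApproxBlock 𝒞 ρ S α e k)) (hM : M ≠ []) :
    IsApprox 𝒞 ρ S (k + M.length) (blockWord M) (blockValue M) := by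
  induction M, hM using List.recNeNil with
  | singleton p => simpa [blockWord, blockValue] using p.2.1.mono hρ (Nat.le_succ k)
  | cons p M _ ih => exact (p.2.1.mono hρ (Nat.le_add_right k M.length)).mul hqc hρ hmult ih

variable [Monoid N]

theorem apply_blockWord (hα : IsMonoidMorphism α) (he : IsIdempotentElem e)
    (M : List (ApproxBlock 𝒞 ρ S α e k)) (hM : M ≠ []) : α (blockWord M) = e := by
  induction M, hM using List.recNeNil with
  | singleton p => simpa [blockWord] using p.2.2
  | cons p M _ ih =>
    change α (p.1.1 ++ blockWord M) = e
    rw [hα.2, p.2.2, ih, he]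

theorem blockWord_mem_approximableAt_of_sandwich (hqc : QuotientClosed 𝒞) (hρ : IsRatingMap ρ)
    (hmult : IsMultiplicative ρ) (hS : ∀ u, (cclass 𝒞 u, ρ (polClass 𝒞 k₀ u)) ∈ S)
    (hα : IsMonoidMorphism α) (hαρ : DeterminesRating 𝒞 ρ α) (he : IsIdempotentElem e)
    {F : Set R} (hF : IsIdempotentElem F) {n : ℕ} {M : List (ApproxBlock 𝒞 ρ S α e k)}
    (hM : M ∈ shortWithValue blockValue n F * ⊤ * shortWithValue blockValue n F) :
    blockWord M ∈ approximableAt 𝒞 ρ S (k₀ + k + n + 2) := by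
  obtain ⟨_, ⟨y, ⟨hy_ne, hy_len, hyF⟩, x, -, rfl⟩, z, ⟨hz_ne, hz_len, hzF⟩, rfl⟩ := hM
  have hy : IsApprox 𝒞 ρ S (k₀ + k + n) (blockWord y) F :=
    hyF ▸ (isApprox_blockWord hqc hρ hmult y hy_ne).mono hρ (by omega)
  have hz : IsApprox 𝒞 ρ S (k₀ + k + n) (blockWord z) F :=
    hzF ▸ (isApprox_blockWord hqc hρ hmult z hz_ne).mono hρ (by omega)
  change blockWord (y ++ x ++ z) ∈ _
  rw [blockWord_append, blockWord_append, List.append_assoc]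
  rcases eq_or_ne x [] with rfl | hx_ne
  · exact approximableAt_mono hρ (Nat.le_succ _) ⟨_, hy.mul hqc hρ hmult hz⟩
  · exact ⟨_, hy.sandwich hqc hρ hmult hS (by omega) hα hαρ he hF hz
      (apply_blockWord hα he y hy_ne) (apply_blockWord hα he x hx_ne)
      (apply_blockWord hα he z hz_ne)⟩

theorem exists_blockWord_mem_approximableAt [Finite R] (hqc : QuotientClosed 𝒞)
    (hρ : IsRatingMap ρ) (hmult : IsMultiplicative ρ)
    (hS : ∀ u, (cclass 𝒞 u, ρ (polClass 𝒞 k₀ u)) ∈ S) (hα : IsMonoidMorphism α)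
    (hαρ : DeterminesRating 𝒞 ρ α) (he : IsIdempotentElem e) (k : ℕ) :
    ∃ m, ∀ M : List (ApproxBlock 𝒞 ρ S α e k), blockWord M ∈ approximableAt 𝒞 ρ S m := by
  have hideal := (isMulIdeal_uniformlyApproximable hqc hρ hmult hS).comap
    (φ := (blockWord : List (ApproxBlock 𝒞 ρ S α e k) → List A)) rfl blockWord_append
  obtain ⟨X, ⟨m, hm⟩, hX⟩ := hideal.top_mem_of_sandwich isMonoidMorphism_blockValue
    ⟨_, ⟨k + 1, le_rfl⟩, fun M (hM : M.length = 1) =>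
      ⟨_, hM ▸ isApprox_blockWord hqc hρ hmult M (by rintro rfl; simp at hM)⟩⟩
    fun F hF n => ⟨_, ⟨_, le_rfl⟩, fun M hM =>
      blockWord_mem_approximableAt_of_sandwich hqc hρ hmult hS hα hαρ he hF hM⟩
  exact ⟨m, fun M => hm (hX M trivial)⟩

theorem idempotentStarClosed_uniformlyApproximable [Finite R] (hqc : QuotientClosed 𝒞)
    (hρ : IsRatingMap ρ) (hmult : IsMultiplicative ρ)
    (hS : ∀ u, (cclass 𝒞 u, ρ (polClass 𝒞 k₀ u)) ∈ S) (hα : IsMonoidMorphism α)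
    (hαρ : DeterminesRating 𝒞 ρ α) :
    IdempotentStarClosed α (uniformlyApproximable 𝒞 ρ S) := by
  rintro e he X ⟨k, hk⟩ hX
  obtain ⟨m, hm⟩ := exists_blockWord_mem_approximableAt hqc hρ hmult hS hα hαρ he k
  refine ⟨m, fun w hw => ?_⟩
  obtain ⟨l, rfl, hl⟩ := Language.mem_kstar.1 hw
  choose! U hU using fun w (hw : w ∈ X) => hk hw
  let M : List (ApproxBlock 𝒞 ρ S α e k) :=
    l.attach.map fun w => ⟨(w.1, U w.1), hU _ (hl _ w.2), hX _ (hl _ w.2)⟩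
  have hM : blockWord M = l.flatten := by
    simp [M, blockWord]
  exact hM ▸ hm M

theorem exists_forall_isApprox [Finite R] (hfin : 𝒞.Finite) (hqc : QuotientClosed 𝒞)
    (hρ : IsRatingMap ρ) (hmult : IsMultiplicative ρ)
    (hS : ∀ u, (cclass 𝒞 u, ρ (polClass 𝒞 k₀ u)) ∈ S) :
    ∃ n, ∀ w, ∃ U, IsApprox 𝒞 ρ S n w U := by
  obtain ⟨N, _, _, α, hα, hαρ⟩ := exists_determinesRating hfin hqc hmult
  have hletters : letters A ∈ uniformlyApproximable 𝒞 ρ S := by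
    refine ⟨k₀ + 1, fun w hw => ?_⟩
    obtain ⟨a, rfl⟩ := List.length_eq_one_iff.1 hw
    exact isApprox_letter hqc hρ hmult hS a
  obtain ⟨n, hn⟩ := (isMulIdeal_uniformlyApproximable hqc hρ hmult hS).top_mem hα
    (idempotentStarClosed_uniformlyApproximable hqc hρ hmult hS hα hαρ) hletters
  exact ⟨n, fun w => hn trivial⟩

theorem exists_forall_rbpol_polClass [Finite R] (hfin : 𝒞.Finite) (hqc : QuotientClosed 𝒞)
    (hρ : IsRatingMap ρ) (hmult : IsMultiplicative ρ)
    (hS : ∀ u, (cclass 𝒞 u, ρ (polClass 𝒞 k₀ u)) ∈ S) :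
    ∃ n, ∀ w, Rbpol 𝒞 ρ S (cclass 𝒞 w) (ρ {w}) {ρ (polClass 𝒞 n w)} := by
  obtain ⟨n, hn⟩ := exists_forall_isApprox hfin hqc hρ hmult hS
  refine ⟨n, fun w => ?_⟩
  obtain ⟨U, hRbpol, hbound⟩ := hn w
  exact hRbpol.down (singleton_subset_iff.2 (hbound w (polLE.refl ..)))

end Approximation

section Completeness

variable [Semiring R] {𝒞 : LClass A} {ρ : Lang A → R}

/-- The set `P_{BPol(𝒞)}[ρ]`. -/
def bpolImprint (𝒞 : LClass A) (ρ : Lang A → R) : Set (Lang A × R) :=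
  {p | IsCClass 𝒞 p.1 ∧ p.2 ∈ optImprint (BoolC (PolC 𝒞)) ρ p.1}

theorem eventually_ne_rating_polClass (hρ : IsRatingMap ρ) {D : Lang A} {r : R}
    (hr : r ∉ optImprint (BoolC (PolC 𝒞)) ρ D) :
    ∀ᶠ k in Filter.atTop, ∀ u ∈ D, ρ (polClass 𝒞 k u) ≠ r := by
  simp only [optImprint, mem_ofPred_eq, not_forall] at hr
  obtain ⟨Ks, ⟨⟨hKs, hcover⟩, hsub⟩, hr⟩ := hr
  filter_upwards [(Filter.eventually_all_finite hKs).2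
    fun K hK => eventually_polClass_subset (hsub hK)] with k hk u hu
  rintro rfl
  obtain ⟨K, hK, huK⟩ := hcover hu
  exact hr ⟨K, hK, hρ.mono (hk K hK u huK)⟩

theorem eventually_mem_bpolImprint [Finite R] (hfin : 𝒞.Finite) (hρ : IsRatingMap ρ) :
    ∀ᶠ k in Filter.atTop, ∀ u, (cclass 𝒞 u, ρ (polClass 𝒞 k u)) ∈ bpolImprint 𝒞 ρ := by
  have hfinite : {p ∈ range (cclass 𝒞) ×ˢ (univ : Set R) |
      p.2 ∉ optImprint (BoolC (PolC 𝒞)) ρ p.1}.Finite :=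
    ((finite_range_cclass hfin).prod finite_univ).subset fun _ hp => hp.1
  filter_upwards [(Filter.eventually_all_finite hfinite).2
    fun p hp => eventually_ne_rating_polClass hρ hp.2] with k hk u
  refine ⟨⟨u, rfl⟩, ?_⟩
  by_contra hu
  exact hk _ ⟨⟨⟨u, rfl⟩, trivial⟩, hu⟩ u (ceq.refl 𝒞 u) rfl

theorem exists_rle_polClass_of_mem_optImprint [Finite A] (hfin : 𝒞.Finite) (hba : LangBoolAlg 𝒞)
    (hqc : QuotientClosed 𝒞) {L : Lang A} {r : R} (hr : r ∈ optImprint (BoolC (PolC 𝒞)) ρ L)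
    (n : ℕ) : ∃ w ∈ L, rle r (ρ (polClass 𝒞 n w)) := by
  have hcover : IsCCover (BoolC (PolC 𝒞)) (polClass 𝒞 n '' L) L := by
    refine ⟨⟨(finite_range_polClass hfin n).subset (image_subset_range _ _), fun w hw => ?_⟩, ?_⟩
    · exact ⟨_, ⟨w, hw, rfl⟩, mem_polClass_self 𝒞 n w⟩
    · rintro _ ⟨w, -, rfl⟩
      exact polClass_mem_BoolC hfin hba hqc n w
  obtain ⟨_, ⟨w, hw, rfl⟩, hrw⟩ := hr _ hcover
  exact ⟨w, hw, hrw⟩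

theorem bpolSaturated_bpolImprint [Finite A] [Finite R] (hfin : 𝒞.Finite) (hba : LangBoolAlg 𝒞)
    (hqc : QuotientClosed 𝒞) (hρ : IsRatingMap ρ) (hmult : IsMultiplicative ρ)
    (hnice : IsNice ρ) : BPolSaturated 𝒞 ρ (bpolImprint 𝒞 ρ) := by
  obtain ⟨k₀, hk₀⟩ := (eventually_mem_bpolImprint hfin hρ).exists
  obtain ⟨n, hn⟩ := exists_forall_rbpol_polClass hfin hqc hρ hmult hk₀
  refine ⟨fun p hp => hp.1, ?_⟩
  rintro ⟨_, r⟩ ⟨⟨w₀, rfl⟩, hr⟩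
  obtain ⟨w, hw₀, hrw⟩ := exists_rle_polClass_of_mem_optImprint hfin hba hqc hr n
  obtain ⟨l, hl, hsum⟩ := hnice (polClass 𝒞 n w)
  -- `l` may be empty, whereas saturation asks for at least one summand.
  have hsum' : ((w :: l).map fun v => ρ {v}).sum = ρ (polClass 𝒞 n w) := by
    rw [List.map_cons, List.sum_cons, ← hsum]
    exact hρ.mono (singleton_subset_iff.2 (mem_polClass_self 𝒞 n w))
  refine ⟨(w :: l).map fun v => ρ {v}, by simp, hsum'.symm ▸ hrw, fun s hs => ?_⟩
  obtain ⟨v, hv, rfl⟩ := List.mem_map.1 hs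
  have hvw : v ∈ polClass 𝒞 n w := by
    rcases List.mem_cons.1 hv with rfl | hv
    · exact mem_polClass_self 𝒞 n v
    · exact hl v hv
  have hclass : cclass 𝒞 w₀ = cclass 𝒞 v :=
    cclass_eq_iff.2 (ceq.trans hw₀ (mem_polClass.1 hvw).1.ceq)
  have hpolClass : polClass 𝒞 n w = polClass 𝒞 n v := cclass_eq_iff.2 hvw
  rw [hsum', hpolClass]
  exact hclass ▸ hn v

end Completeness

/-- For a finite quotienting Boolean algebra `𝒞` and a nice
multiplicative rating map `ρ`, the set
`P = {(D, r) : D a ∼_𝒞-class, r ∈ I_{BPol(𝒞)}[D, ρ]}` is the greatest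
`BPol(𝒞)`-saturated subset of `(A*/∼_𝒞) × R`. -/
theorem statement17 {A R : Type} [Fintype A] [Semiring R] [Finite R]
    (hidem : ∀ r : R, r + r = r)
    (𝒞 : LClass A) (hfin : 𝒞.Finite) (hba : LangBoolAlg 𝒞)
    (hqc : QuotientClosed 𝒞)
    (ρ : Lang A → R) (hρ : IsRatingMap ρ) (hmult : IsMultiplicative ρ)
    (hnice : IsNice ρ) :
    BPolSaturated 𝒞 ρ
      {p : Lang A × R | IsCClass 𝒞 p.1 ∧
        p.2 ∈ optImprint (BoolC (PolC 𝒞)) ρ p.1} ∧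
    ∀ S : Set (Lang A × R), BPolSaturated 𝒞 ρ S →
      S ⊆ {p : Lang A × R | IsCClass 𝒞 p.1 ∧
        p.2 ∈ optImprint (BoolC (PolC 𝒞)) ρ p.1} := by
  refine ⟨bpolSaturated_bpolImprint hfin hba hqc hρ hmult hnice, fun S hS p hp => ⟨hS.1 p hp, ?_⟩⟩
  exact hS.mem_optImprint hfin hqc hρ hmult hp

end Paper
end

section
/- Let D be a lattice of languages over a finite alphabet A, let ρ : 2^{A*} → R be a nice rating map, and let L ∈ D. Then for every s ∈ I_{Bool(D)}[L, ρ] there exist r₁, …, r_k ∈ R such that s ≤ r₁ + ⋯ + r_k and, for every i ≤ k, the singleton {r₁ + ⋯ + r_k} ∈ I_D[L ∩ ρ_*⁻¹(r_i), τ_{Bool(D),ρ}], where τ_{Bool(D),ρ} : 2^{A*} → 2^R is the rating map K ↦ I_{Bool(D)}[K, ρ]. -/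
open Set

namespace Paper

variable {A R M : Type}

/-- The imprint of a set of languages for a rating map valued in `(2^R, ∪)`
(there, the canonical order is inclusion). -/
def imprintSet (τ : Lang A → Set R) (Ks : LClass A) : Set (Set R) :=
  {U | ∃ K ∈ Ks, U ⊆ τ K}

/-- The `𝒟`-optimal imprint on `L` for a rating map valued in `(2^R, ∪)`. -/
def optImprintSet (𝒟 : LClass A) (τ : Lang A → Set R) (L : Lang A) :
    Set (Set R) :=
  {U | ∀ Ks : LClass A, IsCCover 𝒟 Ks L → U ∈ imprintSet τ Ks}

/-!
By compactness, `s` belongs to `I_ℬ[L, ρ]` exactly when some ultrafilter `U` on `A*` contains `L`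
and satisfies `s ≤ ρ(K)` for every `K ∈ ℬ ∩ U`. When `ℬ` is a Boolean algebra and `R` is finite,
`ℬ ∩ U` has a member `E` for which the set of ratings of its words is least. Niceness then makes
`ρ(E)` least among the `ρ(K)`, and it writes `ρ(E)` as a sum `r₁ + ⋯ + r_k` of ratings of words
of `E`. By the choice of `E`, each `ρ_*⁻¹(r_i)` meets every member of `ℬ ∩ U`, so every `ℬ`-cover of
`L ∩ ρ_*⁻¹(r_i)` has a member in `U`; by the criterion above, `ρ(E)` lies in the optimal imprint of
that member.
-/

section SetFamilies

variable {α β : Type*}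

theorem exists_ultrafilter_of_forall_not_subset_sUnion {𝒮 : Set (Set α)} {L : Set α}
    (h : ∀ T ⊆ 𝒮, T.Finite → ¬L ⊆ ⋃₀ T) :
    ∃ U : Ultrafilter α, L ∈ U ∧ ∀ K ∈ 𝒮, K ∉ U := by
  obtain ⟨U, hU⟩ := Ultrafilter.exists_ultrafilter_of_finite_inter_nonempty
    (insert L (compl '' 𝒮)) fun T hT => by
      have hfin : {K ∈ 𝒮 | Kᶜ ∈ T}.Finite :=
        (T.finite_toSet.preimage compl_injective.injOn).subset fun _ hK => hK.2
      obtain ⟨w, hwL, hw⟩ := not_subset.1 (h _ (sep_subset _ _) hfin)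
      refine ⟨w, fun X hX => ?_⟩
      rcases hT hX with rfl | ⟨K, hK, rfl⟩
      · exact hwL
      · exact fun hwK => hw ⟨K, ⟨hK, hX⟩, hwK⟩
  exact ⟨U, hU (mem_insert _ _), fun K hK =>
    Ultrafilter.compl_mem_iff_notMem.1 (hU (mem_insert_of_mem _ (mem_image_of_mem _ hK)))⟩

theorem exists_forall_image_subset_image [Finite β] (f : α → β) {ℱ : Set (Set α)}
    (hne : ℱ.Nonempty) (hinter : ∀ K ∈ ℱ, ∀ L ∈ ℱ, K ∩ L ∈ ℱ) :
    ∃ E ∈ ℱ, ∀ K ∈ ℱ, f '' E ⊆ f '' K := by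
  obtain ⟨E, hE, hmin⟩ := exists_minimalFor_of_wellFoundedLT (· ∈ ℱ) (f '' ·) hne
  refine ⟨E, hE, fun K hK => ?_⟩
  calc
    f '' E ⊆ f '' (E ∩ K) := hmin (hinter E hE K hK) (image_mono inter_subset_left)
    _ ⊆ f '' K := image_mono inter_subset_right

end SetFamilies

section BooleanClosure

theorem subset_boolC (𝒟 : LClass A) : 𝒟 ⊆ BoolC 𝒟 :=
  subset_sInter fun _ h𝒞 => h𝒞.2

theorem langBoolAlg_boolC (𝒟 : LClass A) : LangBoolAlg (BoolC 𝒟) :=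
  ⟨⟨fun _ h => h.1.1.1, fun _ h => h.1.1.2.1,
    fun K L hK hL 𝒞 h => h.1.1.2.2.1 K L (hK 𝒞 h) (hL 𝒞 h),
    fun K L hK hL 𝒞 h => h.1.1.2.2.2 K L (hK 𝒞 h) (hL 𝒞 h)⟩,
    fun L hL 𝒞 h => h.1.2 L (hL 𝒞 h)⟩

theorem LangLattice.sUnion_mem {𝒞 Ks : LClass A} (h𝒞 : LangLattice 𝒞) (hfin : Ks.Finite)
    (hKs : Ks ⊆ 𝒞) : ⋃₀ Ks ∈ 𝒞 :=
  SupClosed.sSup_mem (fun K hK L hL => h𝒞.2.2.1 K L hK hL) hfin h𝒞.1 hKs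

end BooleanClosure

section RatingMaps

theorem rle_list_sum [AddMonoid R] {l : List R} {t : R} (h : ∀ r ∈ l, rle r t) : rle l.sum t := by
  induction l with
  | nil => exact zero_add t
  | cons r l ih =>
    have hl : l.sum + t = t := ih fun x hx => h x (List.mem_cons_of_mem r hx)
    have hr : r + t = t := h r List.mem_cons_self
    rw [rle, List.sum_cons, add_assoc, hl, hr]

variable [AddCommMonoid R] {ρ : Lang A → R}

theorem IsRatingMap.rle_of_subset (hρ : IsRatingMap ρ) {K L : Lang A} (h : K ⊆ L) :
    rle (ρ K) (ρ L) := by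
  rw [rle, ← hρ.2, union_eq_self_of_subset_left h]

theorem IsNice.exists_ne_nil (hnice : IsNice ρ) (hρ : IsRatingMap ρ) {K : Lang A}
    (hK : K.Nonempty) :
    ∃ l : List (List A), l ≠ [] ∧ (∀ w ∈ l, w ∈ K) ∧ ρ K = (l.map fun w => ρ {w}).sum := by
  obtain ⟨w, hw⟩ := hK
  obtain ⟨l, hl, hsum⟩ := hnice K
  refine ⟨w :: l, List.cons_ne_nil w l, List.forall_mem_cons.2 ⟨hw, hl⟩, ?_⟩
  rw [List.map_cons, List.sum_cons, ← hsum]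
  exact (hρ.rle_of_subset (singleton_subset_iff.2 hw)).symm

theorem IsNice.rle_of_image_subset (hnice : IsNice ρ) (hρ : IsRatingMap ρ) {K L : Lang A}
    (h : (fun w => ρ {w}) '' K ⊆ (fun w => ρ {w}) '' L) : rle (ρ K) (ρ L) := by
  obtain ⟨l, hl, hsum⟩ := hnice K
  rw [hsum]
  refine rle_list_sum (List.forall_mem_map.2 fun w hw => ?_)
  obtain ⟨v, hv, hvw⟩ := h (mem_image_of_mem _ (hl w hw))
  exact hvw ▸ hρ.rle_of_subset (singleton_subset_iff.2 hv)

end RatingMaps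

section OptimalImprints

theorem IsCCover.exists_mem_ultrafilter {𝒟 Ks : LClass A} {L : Lang A} (hKs : IsCCover 𝒟 Ks L)
    {U : Ultrafilter (List A)} (hL : L ∈ U) : ∃ K ∈ Ks, K ∈ U :=
  (Ultrafilter.finite_sUnion_mem_iff hKs.1.1).1 (Filter.mem_of_superset hL hKs.1.2)

theorem mem_optImprint_iff_exists_ultrafilter [Add R] {𝒟 : LClass A} {ρ : Lang A → R}
    {L : Lang A} {s : R} :
    s ∈ optImprint 𝒟 ρ L ↔
      ∃ U : Ultrafilter (List A), L ∈ U ∧ ∀ K ∈ 𝒟, K ∈ U → rle s (ρ K) := by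
  constructor
  · intro hs
    obtain ⟨U, hLU, hU⟩ := exists_ultrafilter_of_forall_not_subset_sUnion
      (𝒮 := {K ∈ 𝒟 | ¬rle s (ρ K)}) (L := L) fun T hT hfin hLT => by
        obtain ⟨K, hK, hsK⟩ := hs T ⟨⟨hfin, hLT⟩, fun K hK => (hT hK).1⟩
        exact (hT hK).2 hsK
    exact ⟨U, hLU, fun K hK hKU => by_contra fun hsK => hU K ⟨hK, hsK⟩ hKU⟩
  · rintro ⟨U, hLU, hU⟩ Ks hKs
    obtain ⟨K, hK, hKU⟩ := hKs.exists_mem_ultrafilter hLU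
    exact ⟨K, hK, hU K (hKs.2 hK) hKU⟩

theorem optImprintSet_anti {𝒞 𝒟 : LClass A} (h : 𝒞 ⊆ 𝒟) {τ : Lang A → Set R} {L : Lang A} :
    optImprintSet 𝒟 τ L ⊆ optImprintSet 𝒞 τ L :=
  fun _ hV Ks hKs => hV Ks ⟨hKs.1, hKs.2.trans h⟩

theorem singleton_mem_optImprintSet_of_ultrafilter [Add R] {ℬ : LClass A} (hℬ : LangBoolAlg ℬ)
    {ρ : Lang A → R} {U : Ultrafilter (List A)} {q : R} (hq : ∀ K ∈ ℬ, K ∈ U → rle q (ρ K))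
    {X : Lang A} (hX : ∀ K ∈ ℬ, K ∈ U → (K ∩ X).Nonempty) :
    {q} ∈ optImprintSet ℬ (fun K => optImprint ℬ ρ K) X := by
  intro Ks hKs
  have hKsU : ⋃₀ Ks ∈ U := by
    by_contra hnot
    obtain ⟨w, hw, hwX⟩ := hX (⋃₀ Ks)ᶜ (hℬ.2 _ (hℬ.1.sUnion_mem hKs.1.1 hKs.2))
      (Ultrafilter.compl_mem_iff_notMem.2 hnot)
    exact hw (hKs.1.2 hwX)
  obtain ⟨K, hK, hKU⟩ := (Ultrafilter.finite_sUnion_mem_iff hKs.1.1).1 hKsU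
  exact ⟨K, hK, singleton_subset_iff.2 (mem_optImprint_iff_exists_ultrafilter.2 ⟨U, hKU, hq⟩)⟩

end OptimalImprints

theorem statement18_general [AddCommMonoid R] [Finite R] {ℬ : LClass A} (hℬ : LangBoolAlg ℬ)
    {ρ : Lang A → R} (hρ : IsRatingMap ρ) (hnice : IsNice ρ) {L : Lang A} (hL : L ∈ ℬ) {s : R}
    (hs : s ∈ optImprint ℬ ρ L) :
    ∃ l : List R, l ≠ [] ∧ rle s l.sum ∧
      ∀ r ∈ l, ({l.sum} : Set R) ∈
        optImprintSet ℬ (fun K => optImprint ℬ ρ K) (L ∩ {w : List A | ρ {w} = r}) := by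
  obtain ⟨U, hLU, hsU⟩ := mem_optImprint_iff_exists_ultrafilter.1 hs
  obtain ⟨E, ⟨hE, hEU⟩, hE_least⟩ := exists_forall_image_subset_image (fun w => ρ {w})
    (ℱ := {K | K ∈ ℬ ∧ K ∈ U}) ⟨L, hL, hLU⟩ fun K hK K' hK' =>
      ⟨hℬ.1.2.2.2 K K' hK.1 hK'.1, Filter.inter_mem hK.2 hK'.2⟩
  obtain ⟨l, hne, hlE, hsum⟩ := hnice.exists_ne_nil hρ (U.nonempty_of_mem hEU)
  refine ⟨l.map fun w => ρ {w}, List.map_eq_nil_iff.not.2 hne, hsum ▸ hsU E hE hEU, ?_⟩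
  rw [← hsum]
  refine List.forall_mem_map.2 fun w hw => singleton_mem_optImprintSet_of_ultrafilter hℬ
    (fun K hK hKU => hnice.rle_of_image_subset hρ (hE_least K ⟨hK, hKU⟩)) fun K hK hKU => ?_
  have hKL : K ∩ L ∈ ℬ ∧ K ∩ L ∈ U := ⟨hℬ.1.2.2.2 K L hK hL, Filter.inter_mem hKU hLU⟩
  obtain ⟨v, ⟨hvK, hvL⟩, hvw⟩ := hE_least (K ∩ L) hKL (mem_image_of_mem _ (hlE w hw))
  exact ⟨v, hvK, hvL, hvw⟩

/-- For a lattice `𝒟`, a nice rating map `ρ` and `L ∈ 𝒟`: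
every `s ∈ I_{Bool(𝒟)}[L, ρ]` is below a sum `r₁ + ⋯ + r_k` such that for each
`i`, `{r₁ + ⋯ + r_k}` belongs to the `𝒟`-optimal `τ_{Bool(𝒟),ρ}`-imprint on
`L ∩ ρ_*⁻¹(r_i)`, where `τ_{Bool(𝒟),ρ} : K ↦ I_{Bool(𝒟)}[K, ρ]`. -/
theorem statement18 {A R : Type} [Fintype A] [AddCommMonoid R] [Finite R]
    (hidem : ∀ r : R, r + r = r)
    (𝒟 : LClass A) (hlat : LangLattice 𝒟)
    (ρ : Lang A → R) (hρ : IsRatingMap ρ) (hnice : IsNice ρ)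
    (L : Lang A) (hL : L ∈ 𝒟) (s : R) (hs : s ∈ optImprint (BoolC 𝒟) ρ L) :
    ∃ l : List R, l ≠ [] ∧ rle s l.sum ∧
      ∀ r ∈ l, ({l.sum} : Set R) ∈
        optImprintSet 𝒟 (fun K => optImprint (BoolC 𝒟) ρ K)
          (L ∩ {w : List A | ρ {w} = r}) := by
  obtain ⟨l, hne, hs_le, hl⟩ :=
    statement18_general (langBoolAlg_boolC 𝒟) hρ hnice (subset_boolC 𝒟 hL) hs
  exact ⟨l, hne, hs_le, fun r hr => optImprintSet_anti (subset_boolC 𝒟) (hl r hr)⟩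

end Paper
end
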